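/- arXiv:2211.00308 — 3 statements merged into one kernel-verified Lean document; each statement's English description precedes it below -/
import Mathlib

section
/- Let γ > 0, 1 < α < 2, p > 1, a > 0, b > 0, and let β ∈ [α/2, α). Suppose w ∈ C¹([0,∞)), w ≢ 0, the function t ↦ ₀I_t^{2−α}(w(s) − w'(0)s − w(0)) is in AC²([0,T]) for every T > 0, and for almost every t ≥ 0 one has (₀D_t^α w)(t) + a·w(t) ≥ b·(₀I_t^γ (|w|^p))(t). If α + γ > 2, then liminf_{t→+∞} t^{1−γ−β}·(₀I_t^β w)(t) > 0. -/
/-!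
Put `θ = α/2 ∈ (1/2, 1)` and `g = ₀D_t^α w + a w`. Solving the linear fractional equation and
integrating `θ` times gives (`representation`)
`₀I_t^θ w = K_{3θ} * g + w(0) K_{1+θ} + w'(0) K_{2+θ}`,
where `K_σ(t) = t^(σ-1) E_{2θ,σ}(-a t^(2θ))` is `reKer θ a σ`. Since
`s^(2θ) + a = (s^θ - i√a)(s^θ + i√a)`, `K_σ` is the real part of the kernel
`t^(σ-1) E_{θ,σ}(i√a t^θ)` of order `θ < 1`.

Everything rests on the bound `|E_{θ,θ}(iy)| ≤ 1/Γ(θ)` for real `y` (`norm_mlSum_le`). It comes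
from a maximum principle: `N(s) = E_{θ,θ}(iy s^θ)` satisfies
`∫₀ᵗ (s/(t-s))^θ N'(s) ds = i·c·N(t)` with `c` real, so at a point where `|N|` is maximal over
`[0,t]` the weighted integral of the derivative of `Re(N · conj N(t))` vanishes, which forces
`|N(t)| ≤ |N(0)|` because the weight increases. The bound gives `K_{3θ} = (k_θ - K_θ)/a ≥ 0`, with
`k_σ = t^(σ-1)/Γ(σ)`, as well as `K_{1+θ} = O(1)` and `K_{2+θ} = O(t^(1-θ))`.

As `w` does not vanish identically on `[0,∞)`, `₀I_t^γ |w|^p ≥ c t^(γ-1)` for large `t`. Positivity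
of `K_{3θ}` and `∫₀ᵗ K_{3θ} = t^θ/(a Γ(1+θ)) + O(1)` yield a forcing contribution of at least
`c t^(γ+θ-1)`, which dominates the `O(1)` and `O(t^(1-θ))` terms as `2θ + γ > 2`
(`half_order_eventually`). Integrating this lower bound `β - θ` further times gives the claim.
-/

open MeasureTheory Filter

/-- Riemann–Liouville fractional integral of order `σ` based at `0`:
`(₀I_t^σ f)(t) = (1/Γ(σ)) ∫₀ᵗ (t−s)^{σ−1} f(s) ds`. -/
noncomputable def rlInt (σ : ℝ) (f : ℝ → ℝ) (t : ℝ) : ℝ :=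
  (1 / Real.Gamma σ) * ∫ s in (0:ℝ)..t, (t - s) ^ (σ - 1) * f s

/-- The function whose second derivative is the (left) Caputo derivative of order `α ∈ (1,2]`:
for `α < 2` it is `₀I_t^{2−α}(w(s) − w'(0)·s − w(0))`, and for `α = 2` it is `w` itself. -/
noncomputable def capKernel (α : ℝ) (w : ℝ → ℝ) : ℝ → ℝ :=
  if α = 2 then w else rlInt (2 - α) (fun s => w s - deriv w 0 * s - w 0)

/-- Left Caputo fractional derivative of order `α ∈ (1,2]`:
`(₀D_t^α w)(t) = (d²/dt²)[ ₀I_t^{2−α}(w(s) − w'(0)s − w(0)) ](t)` (second derivative of `w` when `α = 2`). -/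
noncomputable def caputoD (α : ℝ) (w : ℝ → ℝ) : ℝ → ℝ :=
  deriv (deriv (capKernel α w))

/-- `g ∈ AC²([0,T])`: `g` is differentiable on `[0,T]`, its second derivative is integrable,
and `g'` is the integral of `g''` (i.e. `g'` is absolutely continuous). -/
def AC2On (g : ℝ → ℝ) (T : ℝ) : Prop :=
  (∀ t ∈ Set.Icc (0:ℝ) T, DifferentiableAt ℝ g t) ∧
  IntervalIntegrable (deriv (deriv g)) volume 0 T ∧
  ∀ t ∈ Set.Icc (0:ℝ) T, deriv g t = deriv g 0 + ∫ s in (0:ℝ)..t, deriv (deriv g) s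

open Set

/-! ### Riemann–Liouville kernels and half-line convolution -/

/-- The Riemann–Liouville kernel `t^(σ-1) / Γ(σ)`. -/
noncomputable def rlKer (σ t : ℝ) : ℝ := t ^ (σ - 1) / Real.Gamma σ

/-- Convolution on the half-line, `∫₀ᵗ f(t-s) g(s) ds`. -/
noncomputable def conv0 (f g : ℝ → ℝ) (t : ℝ) : ℝ := ∫ s in (0:ℝ)..t, f (t - s) * g s

lemma rlKer_pos {σ t : ℝ} (hσ : 0 < σ) (ht : 0 < t) : 0 < rlKer σ t :=
  div_pos (Real.rpow_pos_of_pos ht _) (Real.Gamma_pos_of_pos hσ)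

lemma rlKer_nonneg {σ t : ℝ} (hσ : 0 < σ) (ht : 0 ≤ t) : 0 ≤ rlKer σ t :=
  div_nonneg (Real.rpow_nonneg ht _) (Real.Gamma_pos_of_pos hσ).le

lemma rlKer_one (t : ℝ) : rlKer 1 t = 1 := by simp [rlKer]

lemma rlKer_two (t : ℝ) : rlKer 2 t = t := by
  simp [rlKer, show (2:ℝ) - 1 = 1 by norm_num]

/-- The semigroup property of the Riemann–Liouville kernels, i.e. the Beta integral. -/
lemma conv0_rlKer {σ τ t : ℝ} (hσ : 0 < σ) (hτ : 0 < τ) (ht : 0 < t) :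
    conv0 (rlKer τ) (rlKer σ) t = rlKer (σ + τ) t := by
  have h1 := Complex.betaIntegral_scaled (σ : ℂ) (τ : ℂ) ht
  rw [Complex.betaIntegral_eq_Gamma_mul_div _ _ (by simpa) (by simpa)] at h1
  have h2 : ∫ x in (0:ℝ)..t, (x : ℂ) ^ ((σ:ℂ) - 1) * ((t : ℂ) - x) ^ ((τ:ℂ) - 1)
      = ((∫ x in (0:ℝ)..t, x ^ (σ - 1) * (t - x) ^ (τ - 1) : ℝ) : ℂ) := by
    rw [← intervalIntegral.integral_ofReal]
    apply intervalIntegral.integral_congr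
    intro x hx
    rw [uIcc_of_le ht.le] at hx
    simp only [Complex.ofReal_mul]
    rw [Complex.ofReal_cpow hx.1, Complex.ofReal_cpow (by linarith [hx.2])]
    push_cast; rfl
  have h3 : ∫ x in (0:ℝ)..t, x ^ (σ - 1) * (t - x) ^ (τ - 1)
      = t ^ (σ + τ - 1) * (Real.Gamma σ * Real.Gamma τ / Real.Gamma (σ + τ)) := by
    rw [h2] at h1
    have : ((t:ℂ) ^ ((σ:ℂ) + τ - 1)) = ((t ^ (σ + τ - 1) : ℝ) : ℂ) := by
      rw [Complex.ofReal_cpow ht.le]; push_cast; rfl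
    rw [this, ← Complex.ofReal_add, Complex.Gamma_ofReal, Complex.Gamma_ofReal,
      Complex.Gamma_ofReal] at h1
    exact_mod_cast h1
  have hG1 := (Real.Gamma_pos_of_pos hσ).ne'
  have hG2 := (Real.Gamma_pos_of_pos hτ).ne'
  have hG3 := (Real.Gamma_pos_of_pos (add_pos hσ hτ)).ne'
  have h4 : conv0 (rlKer τ) (rlKer σ) t
      = (1 / (Real.Gamma σ * Real.Gamma τ)) * ∫ x in (0:ℝ)..t, x ^ (σ - 1) * (t - x) ^ (τ - 1) := by
    rw [conv0, ← intervalIntegral.integral_const_mul]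
    congr 1; ext s
    simp only [rlKer]; field_simp
  rw [h4, h3, rlKer]
  field_simp

lemma rlKer_conv_integrable {σ τ t : ℝ} (hσ : 0 < σ) (hτ : 0 < τ) (ht : 0 < t) :
    IntervalIntegrable (fun s => rlKer τ (t - s) * rlKer σ s) volume 0 t := by
  -- the integral of a non-integrable function would be `0`, but `conv0_rlKer` gives a positive value
  by_contra h
  have h1 := conv0_rlKer hσ hτ ht
  rw [conv0, intervalIntegral.integral_undef h] at h1
  exact (rlKer_pos (add_pos hσ hτ) ht).ne h1

lemma rlKer_integrable {σ : ℝ} (hσ : 0 < σ) (t : ℝ) :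
    IntervalIntegrable (rlKer σ) volume 0 t :=
  (intervalIntegral.intervalIntegrable_rpow' (by linarith)).div_const _

lemma conv0_comm (f g : ℝ → ℝ) (t : ℝ) : conv0 f g t = conv0 g f t := by
  have := intervalIntegral.integral_comp_sub_left (a := 0) (b := t)
    (fun s => f (t - s) * g s) t
  simp only [sub_self, sub_zero, sub_sub_cancel] at this
  rw [conv0, conv0, ← this]
  congr 1; ext s; ring

/-- Convolution sees only the values of its arguments on `(0, t)`. -/
lemma conv0_congr {f f' g g' : ℝ → ℝ} {t : ℝ} (ht : 0 ≤ t) (hf : ∀ s ∈ Ioo 0 t, f s = f' s)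
    (hg : ∀ᵐ s, s ∈ Ioo 0 t → g s = g' s) : conv0 f g t = conv0 f' g' t := by
  rw [conv0, conv0]
  apply intervalIntegral.integral_congr_ae
  have h0 : ∀ᵐ s : ℝ, s ≠ t := by simp [ae_iff]
  filter_upwards [hg, h0] with s hs h0 hm
  rw [uIoc_of_le ht] at hm
  have : s ∈ Ioo 0 t := ⟨hm.1, lt_of_le_of_ne hm.2 h0⟩
  rw [hs this, hf (t - s) ⟨by linarith [this.2], by linarith [this.1]⟩]

lemma integrable_indicator_Ioo {f : ℝ → ℝ} {t : ℝ} (ht : 0 < t)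
    (hf : IntervalIntegrable f volume 0 t) : Integrable ((Ioo 0 t).indicator f) := by
  rw [integrable_indicator_iff measurableSet_Ioo]
  exact (intervalIntegrable_iff_integrableOn_Ioo_of_le ht.le).1 hf

/-- On `(0,t)` the half-line convolution agrees with the convolution on `ℝ` of the
truncated functions. -/
lemma conv0_eq_integral {g h : ℝ → ℝ} {s t : ℝ} (hs : s ∈ Ioo 0 t) :
    ∫ r, (Ioo 0 t).indicator g (s - r) * (Ioo 0 t).indicator h r = conv0 g h s := by
  rw [conv0, intervalIntegral.integral_of_le hs.1.le, integral_Ioc_eq_integral_Ioo,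
    ← integral_indicator measurableSet_Ioo]
  congr 1; ext r
  by_cases hr : r ∈ Ioo 0 s
  · rw [indicator_of_mem hr, indicator_of_mem, indicator_of_mem]
    · exact ⟨hr.1, hr.2.trans hs.2⟩
    · exact ⟨by linarith [hr.2], by linarith [hr.1, hs.2]⟩
  · rw [indicator_of_notMem hr]
    by_cases h0 : 0 < r
    · rw [indicator_of_notMem (s := Ioo 0 t) (a := s - r), zero_mul]
      intro h; exact hr ⟨h0, by linarith [h.1]⟩
    · rw [indicator_of_notMem (s := Ioo 0 t) (a := r), mul_zero]
      intro h; exact h0 h.1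

lemma conv0_integrand_prod {g h : ℝ → ℝ} {t : ℝ} (ht : 0 < t)
    (hg : IntervalIntegrable g volume 0 t) (hh : IntervalIntegrable h volume 0 t) :
    Integrable (fun p : ℝ × ℝ => (Ioo 0 t).indicator g (p.1 - p.2) * (Ioo 0 t).indicator h p.2)
      (volume.prod volume) := by
  have := (integrable_indicator_Ioo ht hh).convolution_integrand
    (ContinuousLinearMap.mul ℝ ℝ) (integrable_indicator_Ioo ht hg)
  simpa [mul_comm] using this

lemma conv0_integrable {g h : ℝ → ℝ} {t : ℝ} (ht : 0 < t)
    (hg : IntervalIntegrable g volume 0 t) (hh : IntervalIntegrable h volume 0 t) :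
    IntervalIntegrable (conv0 g h) volume 0 t := by
  have h1 := (conv0_integrand_prod ht hg hh).integral_prod_left
  rw [intervalIntegrable_iff_integrableOn_Ioo_of_le ht.le]
  refine (h1.integrableOn (s := Ioo 0 t)).congr_fun (fun s hs => ?_) measurableSet_Ioo
  exact conv0_eq_integral hs

/-- Associativity of the half-line convolution: Fubini on a triangle. The first factor is
bounded, the other two merely integrable. -/
lemma conv0_assoc {f g h : ℝ → ℝ} {t C : ℝ} (ht : 0 < t)
    (hf : IntervalIntegrable f volume 0 t) (hC : ∀ s ∈ Ioo 0 t, |f s| ≤ C)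
    (hg : IntervalIntegrable g volume 0 t) (hh : IntervalIntegrable h volume 0 t) :
    conv0 f (conv0 g h) t = conv0 (conv0 f g) h t := by
  set f' := (Ioo 0 t).indicator f with hf'
  set g' := (Ioo 0 t).indicator g with hg'
  set h' := (Ioo 0 t).indicator h with hh'
  have hC0 : 0 ≤ C := (abs_nonneg _).trans (hC (t / 2) ⟨by linarith, by linarith⟩)
  have hbd : ∀ s, ‖f' s‖ ≤ C := by
    intro s
    by_cases hs : s ∈ Ioo 0 t
    · rw [hf', indicator_of_mem hs]; exact hC s hs
    · rw [hf', indicator_of_notMem hs]; simpa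
  have hInt : Integrable (fun p : ℝ × ℝ => f' (t - p.1) * (g' (p.1 - p.2) * h' p.2))
      (volume.prod volume) := by
    refine (conv0_integrand_prod ht hg hh).bdd_mul (c := C) ?_ (Eventually.of_forall fun p => hbd _)
    have h1 : AEStronglyMeasurable (fun s => f' (t - s)) volume :=
      ((integrable_indicator_Ioo ht hf).comp_sub_left t).aestronglyMeasurable
    exact h1.comp_fst
  have hsw := integral_integral_swap (f := fun s r => f' (t - s) * (g' (s - r) * h' r)) hInt
  have e1 : ∀ s, ∫ r, f' (t - s) * (g' (s - r) * h' r)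
      = (Ioo 0 t).indicator (fun s => f (t - s) * conv0 g h s) s := by
    intro s
    rw [integral_const_mul]
    by_cases hs : s ∈ Ioo 0 t
    · rw [indicator_of_mem hs, conv0_eq_integral hs, hf', indicator_of_mem]
      exact ⟨by linarith [hs.2], by linarith [hs.1]⟩
    · rw [indicator_of_notMem hs, hf', indicator_of_notMem, zero_mul]
      intro h; exact hs ⟨by linarith [h.2], by linarith [h.1]⟩
  have e2 : ∀ r, ∫ s, f' (t - s) * (g' (s - r) * h' r)
      = (Ioo 0 t).indicator (fun r => conv0 f g (t - r) * h r) r := by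
    intro r
    by_cases hr : r ∈ Ioo 0 t
    · rw [indicator_of_mem hr, ← conv0_eq_integral (t := t) (s := t - r)
        ⟨by linarith [hr.2], by linarith [hr.1]⟩, ← integral_mul_const,
        ← integral_sub_right_eq_self (fun q => (Ioo 0 t).indicator f (t - r - q) *
          (Ioo 0 t).indicator g q * h r) r]
      congr 1; ext s
      rw [hh', indicator_of_mem hr, ← hf', ← hg', show t - r - (s - r) = t - s by ring]
      ring
    · simp [hh', indicator_of_notMem hr]
  simp_rw [e1, e2] at hsw
  rw [integral_indicator measurableSet_Ioo, integral_indicator measurableSet_Ioo] at hsw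
  rw [conv0, conv0, intervalIntegral.integral_of_le ht.le, intervalIntegral.integral_of_le ht.le,
    integral_Ioc_eq_integral_Ioo, integral_Ioc_eq_integral_Ioo, hsw]

/-! ### Mittag-Leffler kernels on the imaginary axis -/

/-- Superexponential growth of `Γ`, from restricting the Gamma integral to `[R, R + 1]`. -/
lemma exp_mul_rpow_le_Gamma {R s : ℝ} (hR : 0 < R) (hs : 1 ≤ s) :
    Real.exp (-(R + 1)) * R ^ (s - 1) ≤ Real.Gamma s := by
  have hs0 : 0 < s := by linarith
  rw [Real.Gamma_eq_integral hs0]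
  have h1 : ∫ x in Ioc R (R + 1), Real.exp (-(R + 1)) * R ^ (s - 1)
      = Real.exp (-(R + 1)) * R ^ (s - 1) := by simp
  rw [← h1]
  refine (setIntegral_mono_on (integrableOn_const (by simp)) ?_ measurableSet_Ioc ?_).trans
    (setIntegral_mono_set (Real.GammaIntegral_convergent hs0) ?_ ?_)
  · exact (Real.GammaIntegral_convergent hs0).mono_set fun x hx => hR.trans hx.1
  · intro x hx
    have h2 := hx.1.le
    have h3 := hx.2
    gcongr
  · filter_upwards [self_mem_ae_restrict measurableSet_Ioi] with x hx
    have : (0:ℝ) < x := hx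
    simp only [Pi.zero_apply]; positivity
  · exact (LE.le.eventuallyLE fun x hx => hR.trans hx.1)

lemma summable_pow_div_Gamma {θ σ M : ℝ} (hθ : 0 < θ) (hM : 0 ≤ M) :
    Summable (fun n : ℕ => M ^ n / Real.Gamma (θ * n + σ)) := by
  -- `R ^ θ = 2 * M + 1` makes the terms eventually smaller than those of a geometric series
  set R : ℝ := (2 * M + 1) ^ (1 / θ) with hR
  have hR0 : 0 < R := by positivity
  have hRθ : R ^ θ = 2 * M + 1 := by
    rw [hR, ← Real.rpow_mul (by positivity)]
    simp [hθ.ne']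
  have hgeo : Summable (fun n : ℕ => (Real.exp (R + 1) * R ^ (1 - σ)) * (1 / 2 : ℝ) ^ n) :=
    (summable_geometric_two).mul_left _
  refine Summable.of_norm_bounded_eventually_nat hgeo ?_
  have hlarge : ∀ᶠ n : ℕ in atTop, 1 ≤ θ * n + σ := by
    have : Tendsto (fun n : ℕ => θ * (n:ℝ) + σ) atTop atTop :=
      tendsto_atTop_add_const_right _ _ (tendsto_natCast_atTop_atTop.const_mul_atTop hθ)
    exact this.eventually_ge_atTop 1
  filter_upwards [hlarge] with n hn
  have hG := exp_mul_rpow_le_Gamma hR0 hn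
  have hG0 : 0 < Real.Gamma (θ * n + σ) := Real.Gamma_pos_of_pos (by linarith)
  rw [Real.norm_of_nonneg (by positivity), div_le_iff₀ hG0]
  have e : R ^ (θ * n + σ - 1) = (2 * M + 1) ^ n * R ^ (σ - 1) := by
    rw [show θ * n + σ - 1 = θ * n + (σ - 1) by ring, Real.rpow_add hR0, Real.rpow_mul hR0.le, hRθ,
      Real.rpow_natCast]
  rw [e] at hG
  have hpow : M ^ n ≤ (1 / 2 : ℝ) ^ n * (2 * M + 1) ^ n := by
    rw [← mul_pow]
    gcongr; linarith
  calc M ^ n ≤ (1 / 2 : ℝ) ^ n * (2 * M + 1) ^ n := hpow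
    _ = (Real.exp (R + 1) * R ^ (1 - σ)) * (1 / 2 : ℝ) ^ n
        * (Real.exp (-(R + 1)) * ((2 * M + 1) ^ n * R ^ (σ - 1))) := by
      have e1 : Real.exp (R + 1) * Real.exp (-(R + 1)) = 1 := by
        rw [← Real.exp_add]; simp
      have e2 : R ^ (1 - σ) * R ^ (σ - 1) = 1 := by
        rw [← Real.rpow_add hR0]; simp
      linear_combination (-(1 / 2 : ℝ) ^ n * (2 * M + 1) ^ n * R ^ (1 - σ) * R ^ (σ - 1)) * e1
        - (1 / 2 : ℝ) ^ n * (2 * M + 1) ^ n * e2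
    _ ≤ _ := by gcongr

/-- The two-parameter Mittag-Leffler function on the imaginary axis,
`E_{θ,σ}(i·lam·τ) = ∑ (i·lam·τ)ⁿ / Γ(θn+σ)`. -/
noncomputable def mlSum (θ lam σ τ : ℝ) : ℂ :=
  ∑' n : ℕ, (Complex.I * lam * τ) ^ n / (Real.Gamma (θ * n + σ) : ℂ)

/-- The Mittag-Leffler kernel `t^(σ-1) E_{θ,σ}(i·lam·t^θ)`; its Laplace transform is
`s^(θ-σ) / (s^θ - i·lam)`. -/
noncomputable def mlKer (θ lam σ t : ℝ) : ℂ := (t ^ (σ - 1) : ℝ) * mlSum θ lam σ (t ^ θ)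

lemma norm_mlSum_term (θ lam σ τ : ℝ) (hθ : 0 < θ) (hσ : 0 < σ) (n : ℕ) :
    ‖(Complex.I * lam * τ) ^ n / (Real.Gamma (θ * n + σ) : ℂ)‖
      = (|lam| * |τ|) ^ n / Real.Gamma (θ * n + σ) := by
  have : 0 < Real.Gamma (θ * n + σ) := Real.Gamma_pos_of_pos (by positivity)
  simp [abs_of_pos this]

lemma mlSum_summable {θ σ : ℝ} (lam τ : ℝ) (hθ : 0 < θ) (hσ : 0 < σ) :
    Summable (fun n : ℕ => (Complex.I * lam * τ) ^ n / (Real.Gamma (θ * n + σ) : ℂ)) := by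
  refine Summable.of_norm ?_
  simp_rw [norm_mlSum_term θ lam σ τ hθ hσ]
  exact summable_pow_div_Gamma hθ (by positivity)

lemma mlSum_continuous {θ σ : ℝ} (lam : ℝ) (hθ : 0 < θ) (hσ : 0 < σ) :
    Continuous (mlSum θ lam σ) := by
  rw [continuous_iff_continuousAt]
  intro τ₀
  have h : ContinuousOn (mlSum θ lam σ) (Metric.ball 0 (|τ₀| + 1)) := by
    refine continuousOn_tsum (u := fun n : ℕ => (|lam| * (|τ₀| + 1)) ^ n / Real.Gamma (θ * n + σ))
      (fun n => by fun_prop) (summable_pow_div_Gamma hθ (by positivity)) ?_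
    intro n τ hτ
    have : 0 < Real.Gamma (θ * n + σ) := Real.Gamma_pos_of_pos (by positivity)
    rw [norm_mlSum_term θ lam σ τ hθ hσ]
    have h1 : |τ| ≤ |τ₀| + 1 := by simpa using (Metric.mem_ball.1 hτ).le
    gcongr
  exact h.continuousAt (Metric.isOpen_ball.mem_nhds (by simp))

lemma mlKer_hasSum {θ σ t : ℝ} (lam : ℝ) (hθ : 0 < θ) (hσ : 0 < σ) (ht : 0 < t) :
    HasSum (fun n : ℕ => (Complex.I * lam) ^ n * (rlKer (θ * n + σ) t : ℂ)) (mlKer θ lam σ t) := by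
  have h := (mlSum_summable lam (t ^ θ) hθ hσ).hasSum.mul_left ((t ^ (σ - 1) : ℝ) : ℂ)
  refine h.congr_fun fun n => ?_
  rw [rlKer, show θ * n + σ - 1 = θ * n + (σ - 1) by ring, Real.rpow_add ht, Real.rpow_mul ht.le,
    Real.rpow_natCast]
  push_cast
  rw [mul_pow]; ring

lemma mlKer_continuousOn {θ σ : ℝ} (lam : ℝ) (hθ : 0 < θ) (hσ : 0 < σ) :
    ContinuousOn (mlKer θ lam σ) (Ioi 0) := by
  unfold mlKer
  have h1 : ContinuousOn (fun t : ℝ => t ^ (σ - 1)) (Ioi 0) := fun t ht =>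
    (Real.continuousAt_rpow_const _ _ (Or.inl (ne_of_gt ht))).continuousWithinAt
  have h2 : Continuous (fun t : ℝ => t ^ θ) := Real.continuous_rpow_const hθ.le
  exact (Complex.continuous_ofReal.comp_continuousOn h1).mul
    ((mlSum_continuous lam hθ hσ).comp h2).continuousOn

lemma mlKer_bound {θ σ : ℝ} (lam : ℝ) (hθ : 0 < θ) (hσ : 0 < σ) (T : ℝ) :
    ∃ C, 0 ≤ C ∧ ∀ t ∈ Ioc 0 T, ‖mlKer θ lam σ t‖ ≤ C * rlKer σ t := by
  have hc : Continuous (fun t : ℝ => mlSum θ lam σ (t ^ θ)) :=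
    (mlSum_continuous lam hθ hσ).comp (Real.continuous_rpow_const hθ.le)
  obtain ⟨C, hC⟩ := (isCompact_Icc (a := (0:ℝ)) (b := T)).exists_bound_of_continuousOn hc.continuousOn
  have hG := Real.Gamma_pos_of_pos hσ
  refine ⟨|C| * Real.Gamma σ, by positivity, fun t ht => ?_⟩
  have h1 := hC t ⟨ht.1.le, ht.2⟩
  have h2 : 0 ≤ t ^ (σ - 1) := Real.rpow_nonneg ht.1.le _
  rw [mlKer, norm_mul, Complex.norm_real, Real.norm_of_nonneg h2, rlKer]
  calc _ ≤ t ^ (σ - 1) * |C| := by gcongr; exact h1.trans (le_abs_self C)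
    _ = _ := by field_simp

lemma mlKer_succ {θ σ t : ℝ} (lam : ℝ) (hθ : 0 < θ) (hσ : 0 < σ) (ht : 0 < t) :
    mlKer θ lam σ t = rlKer σ t + Complex.I * lam * mlKer θ lam (σ + θ) t := by
  have h1 := mlKer_hasSum lam hθ hσ ht
  have h2 := (mlKer_hasSum lam hθ (add_pos hσ hθ) ht).mul_left (Complex.I * lam)
  have h3 := (hasSum_nat_add_iff' 1).2 h1
  have h4 := h3.unique (h2.congr_fun fun n => by
    rw [Nat.cast_add, Nat.cast_one, pow_succ,
      show θ * ((n:ℝ) + 1) + σ = θ * n + (σ + θ) by ring]; ring)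
  simp at h4
  linear_combination h4

lemma mlKer_conv_integrable {θ σ τ t : ℝ} (lam : ℝ) (hθ : 0 < θ) (hσ : 0 < σ) (hτ : 0 < τ)
    (ht : 0 < t) :
    IntervalIntegrable (fun s => (rlKer τ (t - s) : ℂ) * mlKer θ lam σ s) volume 0 t := by
  obtain ⟨C, hC0, hC⟩ := mlKer_bound lam hθ hσ t
  have h1 := (rlKer_conv_integrable hσ hτ ht).const_mul C
  rw [intervalIntegrable_iff_integrableOn_Ioo_of_le ht.le] at h1 ⊢
  refine Integrable.mono' h1 ?_ ?_
  · have hc : ContinuousOn (fun s => (rlKer τ (t - s) : ℂ) * mlKer θ lam σ s) (Ioo 0 t) := by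
      refine ContinuousOn.mul ?_ ((mlKer_continuousOn lam hθ hσ).mono fun x hx => hx.1)
      refine Complex.continuous_ofReal.comp_continuousOn fun s hs => ?_
      have : t - s ≠ 0 := by linarith [hs.2]
      unfold rlKer
      exact ((ContinuousAt.rpow_const (by fun_prop) (Or.inl this)).div_const _).continuousWithinAt
    exact hc.aestronglyMeasurable measurableSet_Ioo
  · filter_upwards [self_mem_ae_restrict measurableSet_Ioo] with s hs
    have h2 := rlKer_nonneg hτ (t := t - s) (by linarith [hs.2])
    rw [norm_mul, Complex.norm_real, Real.norm_of_nonneg h2]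
    calc _ ≤ rlKer τ (t - s) * (C * rlKer σ s) := by gcongr; exact hC s ⟨hs.1, hs.2.le⟩
      _ = _ := by ring

/-- Fractional integration raises the second parameter of the Mittag-Leffler kernel. -/
lemma mlKer_conv {θ σ τ t : ℝ} (lam : ℝ) (hθ : 0 < θ) (hσ : 0 < σ) (hτ : 0 < τ) (ht : 0 < t) :
    ∫ s in (0:ℝ)..t, (rlKer τ (t - s) : ℂ) * mlKer θ lam σ s = mlKer θ lam (σ + τ) t := by
  set F : ℕ → ℝ → ℂ := fun n s =>
    (Complex.I * lam) ^ n * ((rlKer τ (t - s) * rlKer (θ * n + σ) s : ℝ) : ℂ) with hF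
  have hpos : ∀ n : ℕ, 0 < θ * n + σ := fun n => by positivity
  have hFint : ∀ n, Integrable (F n) (volume.restrict (Ioc 0 t)) := fun n => by
    have := (rlKer_conv_integrable (hpos n) hτ ht)
    rw [intervalIntegrable_iff_integrableOn_Ioc_of_le ht.le] at this
    exact (Integrable.ofReal this).const_mul _
  have hFn : ∀ n, ∫ s in Ioc 0 t, ‖F n s‖ = |lam| ^ n * rlKer (θ * n + σ + τ) t := fun n => by
    rw [← conv0_rlKer (hpos n) hτ ht, conv0, ← intervalIntegral.integral_const_mul,
      intervalIntegral.integral_of_le ht.le]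
    refine setIntegral_congr_fun measurableSet_Ioc fun s hs => ?_
    have h1 := rlKer_nonneg hτ (t := t - s) (by linarith [hs.2])
    have h2 := rlKer_nonneg (hpos n) hs.1.le
    simp only [hF, norm_mul, norm_pow, Complex.norm_I, Complex.norm_real, one_mul, Real.norm_eq_abs]
    rw [abs_of_nonneg h1, abs_of_nonneg h2]
  have hsum : Summable fun n => ∫ s in Ioc 0 t, ‖F n s‖ := by
    simp_rw [hFn]
    have := (mlKer_hasSum lam hθ (add_pos hσ hτ) ht).summable.norm
    convert this using 2 with n
    have h1 := rlKer_nonneg (t := t) (add_pos (hpos n) hτ) ht.le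
    rw [← add_assoc]
    simp [abs_of_nonneg h1]
  have key := hasSum_integral_of_summable_integral_norm hFint hsum
  have e1 : ∫ s in Ioc 0 t, ∑' n, F n s
      = ∫ s in (0:ℝ)..t, (rlKer τ (t - s) : ℂ) * mlKer θ lam σ s := by
    rw [intervalIntegral.integral_of_le ht.le]
    refine setIntegral_congr_fun measurableSet_Ioc fun s hs => ?_
    simp only [← (mlKer_hasSum lam hθ hσ hs.1).tsum_eq, ← tsum_mul_left, hF]
    congr 1; ext n; push_cast; ring
  have e2 : ∀ n, ∫ s in Ioc 0 t, F n s = (Complex.I * lam) ^ n * (rlKer (θ * n + (σ + τ)) t : ℂ) := by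
    intro n
    rw [← add_assoc, ← conv0_rlKer (hpos n) hτ ht, conv0, intervalIntegral.integral_of_le ht.le,
      ← integral_complex_ofReal, ← integral_const_mul]
  simp_rw [e2] at key
  rw [← e1]
  exact key.unique (mlKer_hasSum lam hθ (add_pos hσ hτ) ht)

/-! ### The bound on the Mittag-Leffler kernels -/

/-- A maximum principle for the weight `q(s) = (s/(t-s))^θ`: since `q` increases,
`∫₀ᵗ q u' = 0` is incompatible with `u` attaining its maximum over `[0,t]` at the right end point,
unless `u 0 = u t`. -/
lemma eq_of_weighted_integral_eq_zero {θ t : ℝ} (hθ0 : 0 < θ) (hθ1 : θ < 1) (ht : 0 < t)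
    {u u' : ℝ → ℝ} (huc : ContinuousOn u (Icc 0 t)) (hud : ∀ s ∈ Ioc 0 t, HasDerivAt u (u' s) s)
    (hu'c : ContinuousOn u' (Ioi 0)) (hmax : ∀ s ∈ Icc 0 t, u s ≤ u t)
    (hInt : IntervalIntegrable (fun s => s ^ θ * (t - s) ^ (-θ) * u' s) volume 0 t)
    (hzero : ∫ s in (0:ℝ)..t, s ^ θ * (t - s) ^ (-θ) * u' s = 0) : u 0 = u t := by
  set q : ℝ → ℝ := fun s => s ^ θ * (t - s) ^ (-θ) with hq
  -- Integration by parts in disguise: `M` tends to `0` at both ends of `(0, t)` and has derivative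
  -- `c ↦ (deriv q c) * (u t - u c) ≥ 0`, hence is constant and `u c = u t` on `(0, t)`.
  set M : ℝ → ℝ := fun c => (∫ s in (0:ℝ)..c, q s * u' s) + q c * (u t - u c) with hM
  set q' : ℝ → ℝ := fun c => θ * c ^ (θ - 1) * (t - c) ^ (-θ) + c ^ θ * (θ * (t - c) ^ (-θ - 1))
    with hq'
  have hqd : ∀ c ∈ Ioo 0 t, HasDerivAt q (q' c) c := by
    intro c hc
    have h1 : HasDerivAt (fun s : ℝ => s ^ θ) (θ * c ^ (θ - 1)) c :=
      Real.hasDerivAt_rpow_const (Or.inl hc.1.ne')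
    have h2 : HasDerivAt (fun s : ℝ => (t - s) ^ (-θ)) (θ * (t - c) ^ (-θ - 1)) c := by
      have h3 : HasDerivAt (fun s : ℝ => t - s) (-1) c := by
        simpa using (hasDerivAt_id c).const_sub t
      have := h3.rpow_const (p := -θ) (Or.inl (by linarith [hc.2]))
      convert this using 1; ring
    exact h1.mul h2
  have hq'pos : ∀ c ∈ Ioo 0 t, 0 < q' c := by
    intro c hc
    have h1 := hc.1
    have h2 : 0 < t - c := by linarith [hc.2]
    positivity
  have hMd : ∀ c ∈ Ioo 0 t, HasDerivAt M (q' c * (u t - u c)) c := by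
    intro c hc
    have hqc : ContinuousOn q (Ioo 0 t) := fun s hs => (hqd s hs).continuousAt.continuousWithinAt
    have hcont : ContinuousOn (fun s => q s * u' s) (Ioo 0 t) :=
      hqc.mul (hu'c.mono fun s hs => hs.1)
    have h1 : HasDerivAt (fun c => ∫ s in (0:ℝ)..c, q s * u' s) (q c * u' c) c := by
      refine intervalIntegral.integral_hasDerivAt_right ?_ ?_ ?_
      · exact hInt.mono_set (by
          rw [uIcc_of_le hc.1.le, uIcc_of_le ht.le]; exact Icc_subset_Icc le_rfl hc.2.le)
      · exact hcont.stronglyMeasurableAtFilter isOpen_Ioo c hc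
      · exact hcont.continuousAt (isOpen_Ioo.mem_nhds hc)
    have h2 := h1.add ((hqd c hc).mul ((hud c ⟨hc.1, hc.2.le⟩).const_sub (u t)))
    exact h2.congr_deriv (by ring)
  have hmono : MonotoneOn M (Ioo 0 t) := by
    refine monotoneOn_of_deriv_nonneg (convex_Ioo 0 t)
      (fun c hc => (hMd c hc).continuousAt.continuousWithinAt)
      (fun c hc => ?_) (fun c hc => ?_)
    · rw [interior_Ioo] at hc
      exact (hMd c hc).differentiableAt.differentiableWithinAt
    · rw [interior_Ioo] at hc
      rw [(hMd c hc).deriv]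
      exact mul_nonneg (hq'pos c hc).le (by linarith [hmax c ⟨hc.1.le, hc.2.le⟩])
  have hprim : ContinuousOn (fun c => ∫ s in (0:ℝ)..c, q s * u' s) (Icc 0 t) := by
    have := intervalIntegral.continuousOn_primitive_interval' hInt (left_mem_uIcc)
    rwa [uIcc_of_le ht.le] at this
  have hlim0 : Tendsto M (nhdsWithin 0 (Ioo 0 t)) (nhds 0) := by
    have h1 : Tendsto (fun c => ∫ s in (0:ℝ)..c, q s * u' s) (nhdsWithin 0 (Ioo 0 t)) (nhds 0) := by
      have := (hprim 0 ⟨le_rfl, ht.le⟩).mono (Ioo_subset_Icc_self)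
      simpa [ContinuousWithinAt] using this
    have h2 : Tendsto q (nhdsWithin 0 (Ioo 0 t)) (nhds 0) := by
      have hc : ContinuousAt q 0 := by
        refine ContinuousAt.mul (Real.continuousAt_rpow_const _ _ (Or.inr hθ0.le)) ?_
        exact ContinuousAt.rpow_const (by fun_prop) (Or.inl (by simpa using ht.ne'))
      have h0 : q 0 = 0 := by simp [hq, Real.zero_rpow hθ0.ne']
      have := hc.tendsto
      rw [h0] at this
      exact this.mono_left nhdsWithin_le_nhds
    have h3 : Tendsto (fun c => u t - u c) (nhdsWithin 0 (Ioo 0 t)) (nhds (u t - u 0)) :=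
      tendsto_const_nhds.sub ((huc 0 ⟨le_rfl, ht.le⟩).mono (Ioo_subset_Icc_self))
    simpa using h1.add (h2.mul h3)
  have hlimt : Tendsto M (nhdsWithin t (Ioo 0 t)) (nhds 0) := by
    have h1 : Tendsto (fun c => ∫ s in (0:ℝ)..c, q s * u' s) (nhdsWithin t (Ioo 0 t)) (nhds 0) := by
      have := (hprim t ⟨ht.le, le_rfl⟩).mono (Ioo_subset_Icc_self)
      rw [ContinuousWithinAt, hzero] at this
      exact this
    have h2 : Tendsto (fun c : ℝ => c ^ θ * (t - c) ^ (1 - θ)) (nhdsWithin t (Ioo 0 t)) (nhds 0) := by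
      have hc : ContinuousAt (fun c : ℝ => c ^ θ * (t - c) ^ (1 - θ)) t := by
        refine ContinuousAt.mul (Real.continuousAt_rpow_const _ _ (Or.inr hθ0.le)) ?_
        exact ContinuousAt.rpow_const (by fun_prop) (Or.inr (by linarith))
      have := hc.tendsto
      rw [sub_self, Real.zero_rpow (by linarith), mul_zero] at this
      exact this.mono_left nhdsWithin_le_nhds
    have h3 : Tendsto (slope u t) (nhdsWithin t (Ioo 0 t)) (nhds (u' t)) :=
      (hasDerivAt_iff_tendsto_slope.1 (hud t ⟨ht, le_rfl⟩)).mono_left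
        (nhdsWithin_mono _ fun c hc => ne_of_lt hc.2)
    have h4 : Tendsto (fun c => q c * (u t - u c)) (nhdsWithin t (Ioo 0 t)) (nhds 0) := by
      have := h2.mul h3
      rw [zero_mul] at this
      refine this.congr' ?_
      filter_upwards [self_mem_nhdsWithin] with c hc
      have h5 : 0 < t - c := by linarith [hc.2]
      have h5' : c - t ≠ 0 := by linarith
      rw [slope_def_field, hq, show (1 - θ) = -θ + 1 by ring, Real.rpow_add h5, Real.rpow_one]
      field_simp
      ring
    simpa using h1.add h4
  have hne0 : (nhdsWithin (0:ℝ) (Ioo 0 t)).NeBot := left_nhdsWithin_Ioo_neBot ht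
  have hnet : (nhdsWithin (t:ℝ) (Ioo 0 t)).NeBot := right_nhdsWithin_Ioo_neBot ht
  have hM0 : ∀ c ∈ Ioo 0 t, M c = 0 := by
    intro c hc
    apply le_antisymm
    · refine ge_of_tendsto hlimt ?_
      have : Ioi c ∈ nhdsWithin t (Ioo 0 t) := mem_nhdsWithin_of_mem_nhds (Ioi_mem_nhds hc.2)
      filter_upwards [this, self_mem_nhdsWithin] with d hd hd2
      exact hmono hc hd2 (le_of_lt hd)
    · refine le_of_tendsto hlim0 ?_
      have : Iio c ∈ nhdsWithin 0 (Ioo 0 t) := mem_nhdsWithin_of_mem_nhds (Iio_mem_nhds hc.1)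
      filter_upwards [this, self_mem_nhdsWithin] with d hd hd2
      exact hmono hd2 hc (le_of_lt hd)
  have hu0 : ∀ c ∈ Ioo 0 t, u c = u t := by
    intro c hc
    have h1 : HasDerivAt M 0 c := by
      refine (hasDerivAt_const c (0:ℝ)).congr_of_eventuallyEq ?_
      filter_upwards [isOpen_Ioo.mem_nhds hc] with d hd using hM0 d hd
    have h2 := (hMd c hc).unique h1
    rcases mul_eq_zero.1 h2 with h | h
    · exact absurd h (hq'pos c hc).ne'
    · linarith
  have h1 : Tendsto u (nhdsWithin 0 (Ioo 0 t)) (nhds (u 0)) :=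
    (huc 0 ⟨le_rfl, ht.le⟩).mono Ioo_subset_Icc_self
  refine tendsto_nhds_unique h1 (tendsto_const_nhds.congr' ?_)
  filter_upwards [self_mem_nhdsWithin] with c hc using (hu0 c hc).symm

lemma mlKer_integrable {θ σ : ℝ} (lam : ℝ) (hθ : 0 < θ) (hσ : 0 < σ) {t : ℝ} (ht : 0 < t) :
    IntervalIntegrable (mlKer θ lam σ) volume 0 t := by
  simpa [rlKer_one] using mlKer_conv_integrable lam hθ hσ one_pos ht

lemma mlKer_hasDerivAt {θ σ t : ℝ} (lam : ℝ) (hθ : 0 < θ) (hσ : 0 < σ) (ht : 0 < t) :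
    HasDerivAt (mlKer θ lam (σ + 1)) (mlKer θ lam σ t) t := by
  have hc := mlKer_continuousOn lam hθ hσ
  have h1 : HasDerivAt (fun c => ∫ s in (0:ℝ)..c, mlKer θ lam σ s) (mlKer θ lam σ t) t :=
    intervalIntegral.integral_hasDerivAt_right (mlKer_integrable lam hθ hσ ht)
      (hc.stronglyMeasurableAtFilter isOpen_Ioi t ht) (hc.continuousAt (isOpen_Ioi.mem_nhds ht))
  refine h1.congr_of_eventuallyEq ?_
  filter_upwards [isOpen_Ioi.mem_nhds ht] with c hc
  rw [← mlKer_conv lam hθ hσ one_pos hc]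
  simp [rlKer_one]

/-- `τ · rlKer σ τ` is again a kernel: used to move the factor `s` across a convolution. -/
lemma mul_rlKer {σ τ : ℝ} (hσ : 0 < σ) (hτ : 0 < τ) : τ * rlKer σ τ = σ * rlKer (σ + 1) τ := by
  have h := (Real.Gamma_pos_of_pos hσ).ne'
  rw [rlKer, rlKer, Real.Gamma_add_one hσ.ne', show σ + 1 - 1 = σ - 1 + 1 by ring,
    Real.rpow_add_one hτ.ne']
  field_simp

/-- The identity behind the bound on the Mittag-Leffler kernel. With
`N(s) = E_{θ,θ}(i·lam·s^θ)` it reads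
`∫₀ᵗ (s/(t-s))^θ N'(s) ds = i·lam·Γ(1-θ)·t^θ·N(t)`, a form of `D^θ x = i·lam·x` for
`x = s^(θ-1) N(s)`. -/
lemma mlKer_weighted {θ lam t : ℝ} (hθ0 : 1 / 2 < θ) (hθ1 : θ < 1) (ht : 0 < t) :
    IntervalIntegrable (fun s => (rlKer (1 - θ) (t - s) : ℂ) * (Complex.I * lam *
      (((1 - θ : ℝ) : ℂ) * mlKer θ lam (2 * θ) s + s * mlKer θ lam (2 * θ - 1) s))) volume 0 t ∧
    ∫ s in (0:ℝ)..t, (rlKer (1 - θ) (t - s) : ℂ) * (Complex.I * lam *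
      (((1 - θ : ℝ) : ℂ) * mlKer θ lam (2 * θ) s + s * mlKer θ lam (2 * θ - 1) s))
      = Complex.I * lam * (t * mlKer θ lam θ t) := by
  have hθ : 0 < θ := by linarith
  have i1 := mlKer_conv_integrable lam hθ (σ := 2 * θ) (τ := 1 - θ) (by linarith) (by linarith) ht
  have i2 := mlKer_conv_integrable lam hθ (σ := 2 * θ - 1) (τ := 1 - θ) (by linarith)
    (by linarith) ht
  have i3 := mlKer_conv_integrable lam hθ (σ := 2 * θ - 1) (τ := 1 - θ + 1) (by linarith)
    (by linarith) ht
  have e1 := mlKer_conv lam hθ (σ := 2 * θ) (τ := 1 - θ) (by linarith) (by linarith) ht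
  have e2 := mlKer_conv lam hθ (σ := 2 * θ - 1) (τ := 1 - θ) (by linarith) (by linarith) ht
  have e3 := mlKer_conv lam hθ (σ := 2 * θ - 1) (τ := 1 - θ + 1) (by linarith) (by linarith) ht
  rw [show 2 * θ + (1 - θ) = θ + 1 by ring] at e1
  rw [show 2 * θ - 1 + (1 - θ) = θ by ring] at e2
  rw [show 2 * θ - 1 + (1 - θ + 1) = θ + 1 by ring] at e3
  have i := ((i1.const_mul ((1 - θ : ℝ) : ℂ)).add ((i2.const_mul (t : ℂ)).sub
    (i3.const_mul ((1 - θ : ℝ) : ℂ)))).const_mul (Complex.I * lam)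
  -- write `s = t - (t - s)` and absorb `t - s` into the Riemann–Liouville kernel
  have hfun : EqOn (fun s => Complex.I * lam * (((1 - θ : ℝ) : ℂ) *
      ((rlKer (1 - θ) (t - s) : ℂ) * mlKer θ lam (2 * θ) s) +
      ((t:ℂ) * ((rlKer (1 - θ) (t - s) : ℂ) * mlKer θ lam (2 * θ - 1) s)
      - ((1 - θ : ℝ) : ℂ) * ((rlKer (1 - θ + 1) (t - s) : ℂ) * mlKer θ lam (2 * θ - 1) s))))
      (fun s => (rlKer (1 - θ) (t - s) : ℂ) * (Complex.I * lam *
      (((1 - θ : ℝ) : ℂ) * mlKer θ lam (2 * θ) s + s * mlKer θ lam (2 * θ - 1) s))) (Ioo 0 t) := by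
    intro s hs
    have h := mul_rlKer (σ := 1 - θ) (τ := t - s) (by linarith) (by linarith [hs.2])
    have h' : ((t:ℂ) - s) * (rlKer (1 - θ) (t - s) : ℂ)
        = ((1 - θ : ℝ) : ℂ) * (rlKer (1 - θ + 1) (t - s) : ℂ) := by exact_mod_cast h
    simp only
    linear_combination (Complex.I * lam * mlKer θ lam (2 * θ - 1) s) * h'
  constructor
  · rw [intervalIntegrable_iff_integrableOn_Ioo_of_le ht.le] at i ⊢
    exact i.congr_fun hfun measurableSet_Ioo
  · rw [intervalIntegral.integral_of_le ht.le, integral_Ioc_eq_integral_Ioo,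
      ← setIntegral_congr_fun measurableSet_Ioo hfun, ← integral_Ioc_eq_integral_Ioo,
      ← intervalIntegral.integral_of_le ht.le, intervalIntegral.integral_const_mul,
      intervalIntegral.integral_add (i1.const_mul _) ((i2.const_mul _).sub (i3.const_mul _)),
      intervalIntegral.integral_sub (i2.const_mul _) (i3.const_mul _),
      intervalIntegral.integral_const_mul, intervalIntegral.integral_const_mul,
      intervalIntegral.integral_const_mul, e1, e2, e3]
    ring

/-- `|E_{θ,θ}(i·y)| ≤ E_{θ,θ}(0)` for `1/2 < θ < 1`: a point where the modulus is maximal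
over `[0,t]` can be compared with `0` by the maximum principle. -/
lemma norm_mlSum_le {θ lam T : ℝ} (hθ0 : 1 / 2 < θ) (hθ1 : θ < 1) (hT : 0 ≤ T) :
    ‖mlSum θ lam θ (T ^ θ)‖ ≤ 1 / Real.Gamma θ := by
  have hθ : 0 < θ := by linarith
  set N : ℝ → ℂ := fun s => mlSum θ lam θ (s ^ θ) with hN
  have hNc : Continuous N := (mlSum_continuous lam hθ hθ).comp (Real.continuous_rpow_const hθ.le)
  have hN0 : N 0 = ((1 / Real.Gamma θ : ℝ) : ℂ) := by
    rw [hN]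
    simp only [Real.zero_rpow hθ.ne', mlSum]
    rw [tsum_eq_single 0 (fun n hn => by simp [hn])]
    simp
  have hGpos := Real.Gamma_pos_of_pos hθ
  have hN0n : ‖N 0‖ = 1 / Real.Gamma θ := by
    rw [hN0, Complex.norm_real, Real.norm_of_nonneg (by positivity)]
  obtain ⟨t, htm, hmax⟩ := (isCompact_Icc (a := (0:ℝ)) (b := T)).exists_isMaxOn
    ⟨0, le_rfl, hT⟩ hNc.norm.continuousOn
  have hmax' : ∀ s ∈ Icc 0 T, ‖N s‖ ≤ ‖N t‖ := fun s hs => hmax hs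
  refine (hmax' T ⟨hT, le_rfl⟩).trans ?_
  rw [← hN0n]
  rcases eq_or_lt_of_le htm.1 with h0 | ht
  · rw [h0]
  -- the derivative of `N`, read off from `N(s) = 1/Γ(θ) + i·lam·s^(1-θ)·mlKer (2θ) s`
  set W : ℝ → ℂ := fun s => Complex.I * lam *
      (((1 - θ : ℝ) : ℂ) * mlKer θ lam (2 * θ) s + s * mlKer θ lam (2 * θ - 1) s) with hW
  have hNs : ∀ s > 0, N s = ((1 / Real.Gamma θ : ℝ) : ℂ)
      + Complex.I * lam * (((s ^ (1 - θ) : ℝ) : ℂ) * mlKer θ lam (2 * θ) s) := by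
    intro s hs
    have h1 := mlKer_succ lam hθ hθ hs
    have h2 : s ^ (1 - θ) * s ^ (θ - 1) = 1 := by
      rw [← Real.rpow_add hs]; simp
    have h2' : ((s ^ (1 - θ) : ℝ) : ℂ) * ((s ^ (θ - 1) : ℝ) : ℂ) = 1 := by exact_mod_cast h2
    have h3 : N s = ((s ^ (1 - θ) : ℝ) : ℂ) * mlKer θ lam θ s := by
      rw [mlKer, ← mul_assoc, h2', one_mul]
    have h4 : ((s ^ (1 - θ) : ℝ) : ℂ) * (rlKer θ s : ℂ) = ((1 / Real.Gamma θ : ℝ) : ℂ) := by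
      rw [← Complex.ofReal_mul, rlKer, ← mul_div_assoc, h2]
    rw [h3, h1, mul_add, h4, ← two_mul]; ring
  have hNd : ∀ s > 0, HasDerivAt N (((s ^ (-θ) : ℝ) : ℂ) * W s) s := by
    intro s hs
    have h1 : HasDerivAt (fun s : ℝ => ((s ^ (1 - θ) : ℝ) : ℂ))
        (((1 - θ) * s ^ (1 - θ - 1) : ℝ) : ℂ) s :=
      (Real.hasDerivAt_rpow_const (Or.inl hs.ne')).ofReal_comp
    have h2 : HasDerivAt (mlKer θ lam (2 * θ)) (mlKer θ lam (2 * θ - 1) s) s := by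
      have := mlKer_hasDerivAt lam hθ (σ := 2 * θ - 1) (by linarith) hs
      rwa [sub_add_cancel] at this
    have h3 := ((h1.mul h2).const_mul (Complex.I * lam)).const_add ((1 / Real.Gamma θ : ℝ) : ℂ)
    refine (h3.congr_of_eventuallyEq ?_).congr_deriv ?_
    · filter_upwards [isOpen_Ioi.mem_nhds hs] with c hc using hNs c hc
    · rw [show 1 - θ - 1 = -θ by ring, show (1 - θ) = -θ + 1 by ring, Real.rpow_add_one hs.ne']
      simp only [hW]
      push_cast
      ring
  have hWc : ContinuousOn W (Ioi 0) := by
    have h1 := mlKer_continuousOn lam hθ (σ := 2 * θ) (by linarith)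
    have h2 := mlKer_continuousOn lam hθ (σ := 2 * θ - 1) (by linarith)
    have h3 : ContinuousOn (fun s : ℝ => (s : ℂ)) (Ioi 0) := Complex.continuous_ofReal.continuousOn
    exact continuousOn_const.mul ((continuousOn_const.mul h1).add (h3.mul h2))
  -- project onto the direction of `N t`
  set c : ℂ := (starRingEnd ℂ) (N t) with hc
  set L : ℂ →L[ℝ] ℝ := Complex.reCLM.comp ((ContinuousLinearMap.mul ℝ ℂ) c) with hL
  have hLa : ∀ z, L z = (c * z).re := fun z => by simp [hL]
  obtain ⟨hwi, hwe⟩ := mlKer_weighted (lam := lam) hθ0 hθ1 ht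
  have hG1 := Real.Gamma_pos_of_pos (show 0 < 1 - θ by linarith)
  have hfun : EqOn (fun s => Real.Gamma (1 - θ) * L ((rlKer (1 - θ) (t - s) : ℂ) * W s))
      (fun s => s ^ θ * (t - s) ^ (-θ) * L (((s ^ (-θ) : ℝ) : ℂ) * W s)) (Ioo 0 t) := by
    intro s hs
    have h1 : s ^ θ * s ^ (-θ) = 1 := by rw [← Real.rpow_add hs.1]; simp
    simp only [← Complex.real_smul, map_smul, smul_eq_mul]
    rw [rlKer, show 1 - θ - 1 = -θ by ring]
    field_simp
    linear_combination (-(t - s) ^ (-θ) * L (W s)) * h1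
  have hii : IntervalIntegrable (fun s => Real.Gamma (1 - θ) *
      L ((rlKer (1 - θ) (t - s) : ℂ) * W s)) volume 0 t :=
    (show IntervalIntegrable (fun s => L ((rlKer (1 - θ) (t - s) : ℂ) * W s)) volume 0 t from
      ⟨L.integrable_comp hwi.1, L.integrable_comp hwi.2⟩).const_mul _
  have hLN : ∀ s, L (N s) ≤ ‖N t‖ * ‖N s‖ := by
    intro s
    rw [hLa]
    refine (Complex.re_le_norm _).trans ?_
    rw [norm_mul, hc, RCLike.norm_conj]
  have hLt : L (N t) = ‖N t‖ * ‖N t‖ := by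
    rw [hLa, hc, mul_comm, Complex.mul_conj, Complex.ofReal_re, Complex.normSq_eq_norm_sq, sq]
  have hfin := eq_of_weighted_integral_eq_zero hθ hθ1 ht (u := fun s => L (N s))
    (u' := fun s => L (((s ^ (-θ) : ℝ) : ℂ) * W s))
    (L.continuous.comp hNc).continuousOn
    (fun s hs => L.hasFDerivAt.comp_hasDerivAt s (hNd s hs.1))
    (by
      refine L.continuous.comp_continuousOn (ContinuousOn.mul ?_ hWc)
      exact Complex.continuous_ofReal.comp_continuousOn fun s hs =>
        (Real.continuousAt_rpow_const _ _ (Or.inl (ne_of_gt hs))).continuousWithinAt)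
    (fun s hs => by
      simp only [hLt]
      exact (hLN s).trans (mul_le_mul_of_nonneg_left (hmax' s ⟨hs.1, hs.2.trans htm.2⟩)
        (norm_nonneg _)))
    (by
      rw [intervalIntegrable_iff_integrableOn_Ioo_of_le ht.le] at hii ⊢
      exact hii.congr_fun hfun measurableSet_Ioo)
    (by
      rw [intervalIntegral.integral_of_le ht.le, integral_Ioc_eq_integral_Ioo,
        ← setIntegral_congr_fun measurableSet_Ioo hfun, ← integral_Ioc_eq_integral_Ioo,
        ← intervalIntegral.integral_of_le ht.le, intervalIntegral.integral_const_mul,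
        L.intervalIntegral_comp_comm hwi, hwe, hLa, mlKer]
      have : c * (Complex.I * lam * (t * (((t ^ (θ - 1) : ℝ) : ℂ) * mlSum θ lam θ (t ^ θ))))
          = Complex.I * ((lam * t * t ^ (θ - 1) * (‖N t‖ * ‖N t‖) : ℝ) : ℂ) := by
        have h1 : c * mlSum θ lam θ (t ^ θ) = ((‖N t‖ * ‖N t‖ : ℝ) : ℂ) := by
          rw [hc, mul_comm]
          change N t * _ = _
          rw [Complex.mul_conj, Complex.normSq_eq_norm_sq, sq]
        push_cast at h1 ⊢
        linear_combination (Complex.I * lam * t * ((t ^ (θ - 1) : ℝ) : ℂ)) * h1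
      rw [this, Complex.re_mul_ofReal]
      simp)
  rw [hLt] at hfin
  have h5 := hLN 0
  rw [hfin] at h5
  rcases eq_or_lt_of_le (norm_nonneg (N t)) with h | h
  · rw [← h]; exact norm_nonneg _
  · exact le_of_mul_le_mul_left h5 h

lemma norm_mlKer_le_self {θ lam t : ℝ} (hθ0 : 1 / 2 < θ) (hθ1 : θ < 1) (ht : 0 ≤ t) :
    ‖mlKer θ lam θ t‖ ≤ rlKer θ t := by
  have h1 : 0 ≤ t ^ (θ - 1) := Real.rpow_nonneg ht _
  rw [mlKer, norm_mul, Complex.norm_real, Real.norm_of_nonneg h1, rlKer, div_eq_mul_one_div]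
  exact mul_le_mul_of_nonneg_left (norm_mlSum_le hθ0 hθ1 ht) h1

lemma norm_mlKer_le {θ lam σ t : ℝ} (hθ0 : 1 / 2 < θ) (hθ1 : θ < 1) (hσ : θ ≤ σ) (ht : 0 < t) :
    ‖mlKer θ lam σ t‖ ≤ rlKer σ t := by
  have hθ : 0 < θ := by linarith
  rcases eq_or_lt_of_le hσ with h | h
  · rw [← h]; exact norm_mlKer_le_self hθ0 hθ1 ht.le
  have e1 := mlKer_conv lam hθ hθ (sub_pos.2 h) ht
  have e2 := conv0_rlKer hθ (sub_pos.2 h) ht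
  rw [add_sub_cancel] at e1 e2
  rw [← e1, ← e2, conv0]
  -- the case `σ = θ`, integrated `σ - θ` times
  refine intervalIntegral.norm_integral_le_of_norm_le ht.le ?_
    (rlKer_conv_integrable hθ (sub_pos.2 h) ht)
  refine Eventually.of_forall fun s hs => ?_
  have h1 := rlKer_nonneg (sub_pos.2 h) (t := t - s) (by linarith [hs.2])
  rw [norm_mul, Complex.norm_real, Real.norm_of_nonneg h1]
  exact mul_le_mul_of_nonneg_left (norm_mlKer_le_self hθ0 hθ1 hs.1.le) h1

/-! ### The real kernels -/

/-- The real part of the Mittag-Leffler kernel with `lam = √a`, that is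
`∑ (-a)ⁿ t^(2θn+σ-1) / Γ(2θn+σ)`; its Laplace transform is `s^(2θ-σ) / (s^(2θ) + a)`. -/
noncomputable def reKer (θ a σ t : ℝ) : ℝ := (mlKer θ (√a) σ t).re

lemma reKer_integrable {θ σ t : ℝ} (a : ℝ) (hθ : 0 < θ) (hσ : 0 < σ) (ht : 0 < t) :
    IntervalIntegrable (reKer θ a σ) volume 0 t := by
  have h := mlKer_integrable (√a) hθ hσ ht
  exact ⟨Complex.reCLM.integrable_comp h.1, Complex.reCLM.integrable_comp h.2⟩

lemma conv0_reKer {θ σ τ t : ℝ} (a : ℝ) (hθ : 0 < θ) (hσ : 0 < σ) (hτ : 0 < τ) (ht : 0 < t) :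
    conv0 (rlKer τ) (reKer θ a σ) t = reKer θ a (σ + τ) t := by
  have h1 := Complex.reCLM.intervalIntegral_comp_comm (mlKer_conv_integrable (√a) hθ hσ hτ ht)
  rw [mlKer_conv (√a) hθ hσ hτ ht] at h1
  simpa [conv0, reKer] using h1

lemma reKer_im {θ σ t : ℝ} (a : ℝ) (hθ : 0 < θ) (hσ : 0 < σ) (ht : 0 < t) :
    (mlKer θ (√a) σ t).im = √a * reKer θ a (σ + θ) t := by
  have h := congrArg Complex.im (mlKer_succ (√a) hθ hσ ht)
  simpa [reKer] using h

lemma reKer_add {θ σ t a : ℝ} (ha : 0 < a) (hθ : 0 < θ) (hσ : 0 < σ) (ht : 0 < t) :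
    reKer θ a σ t + a * reKer θ a (σ + 2 * θ) t = rlKer σ t := by
  have h := congrArg Complex.re (mlKer_succ (√a) hθ hσ ht)
  have h2 := reKer_im a hθ (add_pos hσ hθ) ht
  have h3 : reKer θ a σ t = rlKer σ t - √a * (mlKer θ (√a) (σ + θ) t).im := by
    simpa [reKer, sub_eq_add_neg] using h
  have h4 : √a * √a = a := Real.mul_self_sqrt ha.le
  rw [h2, show σ + θ + θ = σ + 2 * θ by ring] at h3
  linear_combination h3 - (reKer θ a (σ + 2 * θ) t) * h4

lemma abs_reKer_le {θ a σ t : ℝ} (hθ0 : 1 / 2 < θ) (hθ1 : θ < 1) (hσ : θ ≤ σ) (ht : 0 < t) :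
    |reKer θ a σ t| ≤ rlKer σ t :=
  (Complex.abs_re_le_norm _).trans (norm_mlKer_le hθ0 hθ1 hσ ht)

/-- Positivity of the kernel through which the forcing term enters `₀I_t^θ w`: by `reKer_add` it
is `(rlKer θ - reKer θ a θ) / a`. -/
lemma reKer_nonneg {θ a t : ℝ} (ha : 0 < a) (hθ0 : 1 / 2 < θ) (hθ1 : θ < 1) (ht : 0 < t) :
    0 ≤ reKer θ a (3 * θ) t := by
  have h1 := reKer_add ha (show 0 < θ by linarith) (σ := θ) (by linarith) ht
  rw [show θ + 2 * θ = 3 * θ by ring] at h1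
  have h2 := (abs_le.1 (abs_reKer_le (a := a) hθ0 hθ1 le_rfl ht)).2
  by_contra h
  push Not at h
  nlinarith

lemma abs_reKer_one_le {θ a t : ℝ} (ha : 0 < a) (hθ0 : 1 / 2 < θ) (hθ1 : θ < 1) (ht : 0 < t) :
    |reKer θ a (1 + θ) t| ≤ 1 / √a := by
  have h1 := reKer_im a (show 0 < θ by linarith) one_pos ht
  have h2 := (Complex.abs_im_le_norm _).trans (norm_mlKer_le (lam := √a) hθ0 hθ1 hθ1.le ht)
  have h3 : 0 < √a := Real.sqrt_pos.2 ha
  rw [h1, rlKer_one, abs_mul, abs_of_pos h3] at h2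
  rw [le_div_iff₀ h3]; linarith

lemma abs_reKer_two_le {θ a t : ℝ} (ha : 0 < a) (hθ0 : 1 / 2 < θ) (hθ1 : θ < 1) (ht : 0 < t) :
    |reKer θ a (2 + θ) t| ≤ 2 / a * rlKer (2 - θ) t := by
  have h1 := reKer_add ha (show 0 < θ by linarith) (σ := 2 - θ) (by linarith) ht
  have h2 := abs_le.1 (abs_reKer_le (a := a) hθ0 hθ1 (σ := 2 - θ) (by linarith) ht)
  rw [show 2 - θ + 2 * θ = 2 + θ by ring] at h1
  have h3 : 0 ≤ rlKer (2 - θ) t := rlKer_nonneg (by linarith) ht.le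
  have h4 : |a * reKer θ a (2 + θ) t| ≤ 2 * rlKer (2 - θ) t := by
    rw [abs_le]; constructor <;> linarith [h2.1, h2.2]
  rw [abs_mul, abs_of_pos ha] at h4
  rw [div_mul_eq_mul_div, le_div_iff₀ ha]; linarith

lemma rlKer_mono {σ s t : ℝ} (hσ : 1 ≤ σ) (hs : 0 ≤ s) (hst : s ≤ t) : rlKer σ s ≤ rlKer σ t := by
  have := Real.Gamma_pos_of_pos (show 0 < σ by linarith)
  unfold rlKer
  gcongr

lemma conv0_left_comm {f g h : ℝ → ℝ} {t C : ℝ} (ht : 0 < t)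
    (hf : IntervalIntegrable f volume 0 t) (hC : ∀ s ∈ Ioo 0 t, |f s| ≤ C)
    (hg : IntervalIntegrable g volume 0 t) (hh : IntervalIntegrable h volume 0 t) :
    conv0 g (conv0 f h) t = conv0 f (conv0 g h) t := by
  rw [conv0_comm, ← conv0_assoc ht hf hC hh hg, funext (conv0_comm h g)]

lemma intervalIntegrable_comp_sub {f : ℝ → ℝ} {t : ℝ} (hf : IntervalIntegrable f volume 0 t) :
    IntervalIntegrable (fun s => f (t - s)) volume 0 t := by
  simpa using (hf.comp_sub_left t).symm

lemma conv0_integrand_of_continuous {f g : ℝ → ℝ} {t : ℝ} (ht : 0 < t)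
    (hf : IntervalIntegrable f volume 0 t) (hg : ContinuousOn g (Icc 0 t)) :
    IntervalIntegrable (fun s => f (t - s) * g s) volume 0 t :=
  (intervalIntegrable_comp_sub hf).mul_continuousOn (by rwa [uIcc_of_le ht.le])

lemma conv0_integrand_of_bounded {f g : ℝ → ℝ} {t C : ℝ} (ht : 0 < t)
    (hf : IntervalIntegrable f volume 0 t) (hC : ∀ s ∈ Ioo 0 t, |f s| ≤ C)
    (hg : IntervalIntegrable g volume 0 t) :
    IntervalIntegrable (fun s => f (t - s) * g s) volume 0 t := by
  have h1 := intervalIntegrable_comp_sub hf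
  rw [intervalIntegrable_iff_integrableOn_Ioo_of_le ht.le] at h1 hg ⊢
  refine Integrable.bdd_mul (c := C) hg h1.aestronglyMeasurable ?_
  filter_upwards [self_mem_ae_restrict measurableSet_Ioo] with s hs
  exact hC _ ⟨by linarith [hs.2], by linarith [hs.1]⟩

lemma rlInt_eq_conv0 (σ : ℝ) (f : ℝ → ℝ) (t : ℝ) : rlInt σ f t = conv0 (rlKer σ) f t := by
  rw [rlInt, conv0, ← intervalIntegral.integral_const_mul]
  congr 1; ext s; rw [rlKer]; ring

/-! ### The Caputo derivative and the representation formula -/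

section Caputo

variable {α : ℝ} {w : ℝ → ℝ}

lemma conv0_one_deriv (hw : ContDiff ℝ 1 w) (s : ℝ) :
    conv0 (rlKer 1) (fun r => deriv w r - deriv w 0) s = w s - deriv w 0 * s - w 0 := by
  have hc : Continuous (deriv w) := hw.continuous_deriv le_rfl
  simp only [conv0, rlKer_one, one_mul]
  rw [intervalIntegral.integral_sub (hc.intervalIntegrable _ _) (by simp),
    intervalIntegral.integral_deriv_eq_sub
      (fun x _ => (hw.differentiable one_ne_zero).differentiableAt) (hc.intervalIntegrable _ _)]
  simp
  ring

lemma capKernel_eq (hα2 : α < 2) (t : ℝ) :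
    capKernel α w t = conv0 (rlKer (2 - α)) (fun s => w s - deriv w 0 * s - w 0) t := by
  rw [capKernel, if_neg hα2.ne, rlInt_eq_conv0]

lemma capKernel_eq_primitive (hα2 : α < 2) (hw : ContDiff ℝ 1 w) {t : ℝ} (ht : 0 < t) :
    capKernel α w t
      = ∫ s in (0:ℝ)..t, conv0 (rlKer (2 - α)) (fun r => deriv w r - deriv w 0) s := by
  have hc : Continuous (fun r => deriv w r - deriv w 0) :=
    (hw.continuous_deriv le_rfl).sub continuous_const
  rw [capKernel_eq hα2, ← funext (conv0_one_deriv hw),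
    conv0_left_comm ht (rlKer_integrable one_pos t) (C := 1) (fun s _ => by simp [rlKer_one])
      (rlKer_integrable (by linarith) t) (hc.intervalIntegrable _ _)]
  simp [conv0, rlKer_one]

lemma deriv_capKernel_zero (hα2 : α < 2) (hw : ContDiff ℝ 1 w)
    (hd : DifferentiableAt ℝ (capKernel α w) 0) : deriv (capKernel α w) 0 = 0 := by
  have hc : Continuous (fun r => deriv w r - deriv w 0) :=
    (hw.continuous_deriv le_rfl).sub continuous_const
  obtain ⟨C, hC⟩ := (isCompact_Icc (a := (0:ℝ)) (b := 1)).exists_bound_of_continuousOn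
    hc.continuousOn
  -- `|w s - w'(0) s - w 0| ≤ C s` near `0`, so the kernel is `O(t^(3-α)) = o(t)`
  have hv : ∀ s ∈ Icc (0:ℝ) 1, |w s - deriv w 0 * s - w 0| ≤ C * s := by
    intro s hs
    rw [← conv0_one_deriv hw]
    simp only [conv0, rlKer_one, one_mul]
    have := intervalIntegral.norm_integral_le_of_norm_le_const (a := 0) (b := s) (C := C)
      (f := fun r => deriv w r - deriv w 0) (fun r hr => by
        rw [uIoc_of_le hs.1] at hr
        exact hC r ⟨hr.1.le, hr.2.trans hs.2⟩)
    simpa [abs_of_nonneg hs.1] using this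
  have hG : ∀ t ∈ Ioc (0:ℝ) 1, |capKernel α w t| ≤ C * rlKer (4 - α) t := by
    intro t ht
    have e := conv0_rlKer (σ := 2) (τ := 2 - α) two_pos (by linarith) ht.1
    rw [show 2 + (2 - α) = 4 - α by ring] at e
    rw [capKernel_eq hα2, ← e, conv0, conv0, ← intervalIntegral.integral_const_mul,
      ← Real.norm_eq_abs]
    refine intervalIntegral.norm_integral_le_of_norm_le ht.1.le (Eventually.of_forall fun s hs => ?_)
      ((rlKer_conv_integrable (σ := 2) (τ := 2 - α) two_pos (by linarith) ht.1).const_mul C)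
    have h1 := rlKer_nonneg (σ := 2 - α) (by linarith) (t := t - s) (by linarith [hs.2])
    rw [norm_mul, Real.norm_of_nonneg h1, rlKer_two]
    calc _ ≤ rlKer (2 - α) (t - s) * (C * s) :=
          mul_le_mul_of_nonneg_left (hv s ⟨hs.1.le, hs.2.trans ht.2⟩) h1
      _ = _ := by ring
  have h0 : capKernel α w 0 = 0 := by rw [capKernel_eq hα2]; simp [conv0]
  have hs1 : Tendsto (slope (capKernel α w) 0) (nhdsWithin 0 (Ioi 0))
      (nhds (deriv (capKernel α w) 0)) :=
    (hasDerivAt_iff_tendsto_slope.1 hd.hasDerivAt).mono_left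
      (nhdsWithin_mono _ fun c hc => ne_of_gt hc)
  have hs2 : Tendsto (slope (capKernel α w) 0) (nhdsWithin 0 (Ioi 0)) (nhds 0) := by
    have hlim : Tendsto (fun t : ℝ => C / Real.Gamma (4 - α) * t ^ (2 - α)) (nhdsWithin 0 (Ioi 0))
        (nhds 0) := by
      have h1 : ContinuousAt (fun t : ℝ => C / Real.Gamma (4 - α) * t ^ (2 - α)) 0 :=
        continuousAt_const.mul (Real.continuousAt_rpow_const _ _ (Or.inr (by linarith)))
      have h2 := h1.tendsto
      rw [Real.zero_rpow (by linarith), mul_zero] at h2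
      exact h2.mono_left nhdsWithin_le_nhds
    refine squeeze_zero_norm' ?_ hlim
    have hmem : Iio (1:ℝ) ∈ nhdsWithin (0:ℝ) (Ioi 0) :=
      mem_nhdsWithin_of_mem_nhds (Iio_mem_nhds one_pos)
    filter_upwards [hmem, self_mem_nhdsWithin] with t ht1 ht0
    have ht0' : 0 < t := ht0
    have h1 := hG t ⟨ht0, le_of_lt ht1⟩
    rw [slope_def_field, h0, sub_zero, sub_zero, norm_div, Real.norm_of_nonneg ht0'.le,
      div_le_iff₀ ht0', Real.norm_eq_abs]
    refine h1.trans (le_of_eq ?_)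
    rw [rlKer, show 4 - α - 1 = 2 - α + 1 by ring, Real.rpow_add_one ht0'.ne']
    ring
  exact tendsto_nhds_unique hs1 hs2

lemma deriv_capKernel_eq (hα2 : α < 2) (hw : ContDiff ℝ 1 w)
    (hAC : ∀ T > (0:ℝ), AC2On (capKernel α w) T) {t : ℝ} (ht : 0 ≤ t) :
    deriv (capKernel α w) t = conv0 (rlKer 1) (caputoD α w) t := by
  obtain ⟨h1, h2, h3⟩ := hAC (t + 1) (by linarith)
  rw [h3 t ⟨ht, by linarith⟩, deriv_capKernel_zero hα2 hw (h1 0 ⟨le_rfl, by linarith⟩), zero_add]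
  simp [conv0, rlKer_one, caputoD]

lemma deriv_capKernel_ae (hα2 : α < 2) (hw : ContDiff ℝ 1 w) {t : ℝ} (ht : 0 < t) :
    ∀ᵐ s, s ∈ Ioo 0 t → deriv (capKernel α w) s
      = conv0 (rlKer (2 - α)) (fun r => deriv w r - deriv w 0) s := by
  have hc : Continuous (fun r => deriv w r - deriv w 0) :=
    (hw.continuous_deriv le_rfl).sub continuous_const
  have hi := conv0_integrable ht (rlKer_integrable (show 0 < 2 - α by linarith) t)
    (hc.intervalIntegrable 0 t)
  filter_upwards [hi.ae_hasDerivAt_integral] with s hs hmem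
  have h1 := hs (by rw [uIcc_of_le ht.le]; exact ⟨hmem.1.le, hmem.2.le⟩) 0 left_mem_uIcc
  refine (h1.congr_of_eventuallyEq ?_).deriv
  filter_upwards [isOpen_Ioi.mem_nhds hmem.1] with r hr
  exact capKernel_eq_primitive hα2 hw hr

/-- Variation of constants, integrated to order `θ = α/2`. In terms of Laplace transforms,
`s^(-θ) ŵ = s^(-θ)/(s^(2θ)+a) · ĝ + w(0) · s^(θ-1)/(s^(2θ)+a) + w'(0) · s^(θ-2)/(s^(2θ)+a)`
with `g = ₀D_t^α w + a w`. -/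
lemma representation {θ a : ℝ} (ha : 0 < a) (hθ0 : 1 / 2 < θ) (hθ1 : θ < 1) (hw : ContDiff ℝ 1 w)
    (hAC : ∀ T > (0:ℝ), AC2On (capKernel (2 * θ) w) T) {t : ℝ} (ht : 0 < t) :
    conv0 (rlKer θ) w t
      = conv0 (reKer θ a (3 * θ)) (fun s => caputoD (2 * θ) w s + a * w s) t
        + w 0 * reKer θ a (1 + θ) t + deriv w 0 * reKer θ a (2 + θ) t := by
  have hθ : 0 < θ := by linarith
  set h := caputoD (2 * θ) w with hh
  set v' : ℝ → ℝ := fun r => deriv w r - deriv w 0 with hv'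
  set v : ℝ → ℝ := fun s => w s - deriv w 0 * s - w 0 with hv
  have hc' : Continuous v' := (hw.continuous_deriv le_rfl).sub continuous_const
  have hwc : Continuous w := hw.continuous
  have hvc : Continuous v := by fun_prop
  have hhi : IntervalIntegrable h volume 0 t := (hAC t ht).2.1
  have iK := reKer_integrable a hθ (σ := 3 * θ) (by linarith) ht
  have iD := reKer_integrable a hθ (σ := 3 * θ - 1) (by linarith) ht
  have iX := reKer_integrable a hθ (σ := θ) hθ ht
  have i1 := rlKer_integrable one_pos t
  have ik := rlKer_integrable (σ := 2 - 2 * θ) (by linarith) t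
  have b1 : ∀ s ∈ Ioo 0 t, |rlKer 1 s| ≤ 1 := fun s _ => by simp [rlKer_one]
  obtain ⟨C, hC⟩ := (isCompact_Icc (a := (0:ℝ)) (b := t)).exists_bound_of_continuousOn
    hc'.continuousOn
  have bv : ∀ s ∈ Ioo 0 t, |v' s| ≤ C := fun s hs => hC s ⟨hs.1.le, hs.2.le⟩
  have bK : ∀ s ∈ Ioo 0 t, |reKer θ a (3 * θ) s| ≤ rlKer (3 * θ) t := fun s hs =>
    (abs_reKer_le hθ0 hθ1 (by linarith) hs.1).trans (rlKer_mono (by linarith) hs.1.le hs.2.le)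
  have key : conv0 (reKer θ a (3 * θ)) h t = conv0 (reKer θ a θ) v t := by
    calc conv0 (reKer θ a (3 * θ)) h t
        = conv0 (conv0 (rlKer 1) (reKer θ a (3 * θ - 1))) h t := by
          refine conv0_congr ht.le (fun s hs => ?_) (Eventually.of_forall fun _ _ => rfl)
          rw [conv0_reKer a hθ (by linarith) one_pos hs.1, sub_add_cancel]
      _ = conv0 (rlKer 1) (conv0 (reKer θ a (3 * θ - 1)) h) t := (conv0_assoc ht i1 b1 iD hhi).symm
      _ = conv0 (reKer θ a (3 * θ - 1)) (conv0 (rlKer 1) h) t :=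
          (conv0_left_comm ht i1 b1 iD hhi).symm
      _ = conv0 (reKer θ a (3 * θ - 1)) (conv0 (rlKer (2 - 2 * θ)) v') t := by
          refine conv0_congr ht.le (fun s _ => rfl) ?_
          filter_upwards [deriv_capKernel_ae (α := 2 * θ) (by linarith) hw ht] with s hs hm
          rw [← hs hm, deriv_capKernel_eq (by linarith) hw hAC hm.1.le]
      _ = conv0 (reKer θ a (3 * θ - 1)) (conv0 v' (rlKer (2 - 2 * θ))) t := by
          rw [funext (conv0_comm _ v')]
      _ = conv0 v' (conv0 (reKer θ a (3 * θ - 1)) (rlKer (2 - 2 * θ))) t :=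
          conv0_left_comm ht (hc'.intervalIntegrable _ _) bv iD ik
      _ = conv0 v' (conv0 (rlKer 1) (reKer θ a θ)) t := by
          refine conv0_congr ht.le (fun s _ => rfl) (Eventually.of_forall fun s hs => ?_)
          rw [conv0_comm, conv0_reKer a hθ (by linarith) (by linarith) hs.1,
            conv0_reKer a hθ hθ one_pos hs.1]
          congr 1; ring
      _ = conv0 (rlKer 1) (conv0 v' (reKer θ a θ)) t :=
          conv0_left_comm ht i1 b1 (hc'.intervalIntegrable _ _) iX
      _ = conv0 (conv0 (rlKer 1) v') (reKer θ a θ) t :=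
          conv0_assoc ht i1 b1 (hc'.intervalIntegrable _ _) iX
      _ = conv0 (reKer θ a θ) v t := by
          rw [funext (conv0_one_deriv hw), conv0_comm]
  have jK := conv0_integrand_of_continuous ht iK hwc.continuousOn
  have jKh := conv0_integrand_of_bounded ht iK bK hhi
  have jX := conv0_integrand_of_continuous ht iX hwc.continuousOn
  have jX1 := conv0_integrand_of_continuous ht iX (g := rlKer 1) (by
    rw [funext rlKer_one]; exact continuousOn_const)
  have jX2 := conv0_integrand_of_continuous ht iX (g := rlKer 2) (by
    rw [funext rlKer_two]; exact continuousOn_id)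
  have e1 : conv0 (rlKer θ) w t = conv0 (reKer θ a θ) w t + a * conv0 (reKer θ a (3 * θ)) w t := by
    have : conv0 (rlKer θ) w t = conv0 (fun s => reKer θ a θ s + a * reKer θ a (3 * θ) s) w t := by
      refine conv0_congr ht.le (fun s hs => ?_) (Eventually.of_forall fun _ _ => rfl)
      rw [← reKer_add ha hθ hθ hs.1, show θ + 2 * θ = 3 * θ by ring]
    rw [this, conv0, conv0, conv0, ← intervalIntegral.integral_const_mul,
      ← intervalIntegral.integral_add jX (jK.const_mul a)]
    congr 1; ext s; ring
  have e2 : conv0 (reKer θ a (3 * θ)) (fun s => h s + a * w s) t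
      = conv0 (reKer θ a (3 * θ)) h t + a * conv0 (reKer θ a (3 * θ)) w t := by
    rw [conv0, conv0, conv0, ← intervalIntegral.integral_const_mul,
      ← intervalIntegral.integral_add jKh (jK.const_mul a)]
    congr 1; ext s; ring
  have e3 : conv0 (reKer θ a θ) v t = conv0 (reKer θ a θ) w t
      - deriv w 0 * conv0 (reKer θ a θ) (rlKer 2) t - w 0 * conv0 (reKer θ a θ) (rlKer 1) t := by
    rw [conv0, conv0, conv0, conv0, ← intervalIntegral.integral_const_mul,
      ← intervalIntegral.integral_const_mul,
      ← intervalIntegral.integral_sub jX (jX2.const_mul _),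
      ← intervalIntegral.integral_sub (jX.sub (jX2.const_mul _)) (jX1.const_mul _)]
    congr 1; ext s
    rw [rlKer_one, rlKer_two, hv]; ring
  rw [conv0_comm _ (rlKer 2), conv0_comm _ (rlKer 1), conv0_reKer a hθ hθ two_pos ht,
    conv0_reKer a hθ hθ one_pos ht, add_comm θ 2, add_comm θ 1] at e3
  rw [e1, e2, key, e3]
  ring

end Caputo

/-! ### Lower bounds -/

lemma min_mul_rpow_le {e s x : ℝ} (hs : 0 < s) (h1 : s / 2 ≤ x) (h2 : x ≤ s) :
    min 1 ((1 / 2 : ℝ) ^ e) * s ^ e ≤ x ^ e := by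
  have hx : 0 < x := by linarith
  have hse := Real.rpow_pos_of_pos hs e
  rcases le_total 0 e with he | he
  · calc _ ≤ (1 / 2 : ℝ) ^ e * s ^ e := by gcongr; exact min_le_right _ _
      _ = (1 / 2 * s) ^ e := (Real.mul_rpow (by norm_num) hs.le).symm
      _ ≤ x ^ e := Real.rpow_le_rpow (by positivity) (by linarith) he
  · calc _ ≤ 1 * s ^ e := by gcongr; exact min_le_left _ _
      _ ≤ x ^ e := by rw [one_mul]; exact Real.rpow_le_rpow_of_nonpos hx h2 he

/-- The fractional integral of a nonnegative, not identically zero function is bounded below by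
the contribution of a compact interval, which is of size `s^(γ-1)`. -/
lemma rlInt_lower {γ : ℝ} (hγ : 0 < γ) {f : ℝ → ℝ} (hf : Continuous f) (hf0 : ∀ s, 0 ≤ f s)
    {t₁ : ℝ} (ht₁ : 0 ≤ t₁) (hft : 0 < f t₁) :
    ∃ c > 0, ∃ T > 0, ∀ s ≥ T, c * s ^ (γ - 1) ≤ rlInt γ f s := by
  have hmem : {s | f t₁ / 2 < f s} ∈ nhds t₁ :=
    (isOpen_lt continuous_const hf).mem_nhds (by simp only [mem_ofPred_eq]; linarith)
  obtain ⟨η, hη, hball⟩ := Metric.mem_nhds_iff.1 hmem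
  set q := t₁ + η / 2 with hq
  have hG := Real.Gamma_pos_of_pos hγ
  set m := min 1 ((1 / 2 : ℝ) ^ (γ - 1)) with hm
  have hm0 : 0 < m := lt_min one_pos (by positivity)
  refine ⟨η / 2 * (m / Real.Gamma γ * (f t₁ / 2)), by positivity, 2 * q, by positivity, ?_⟩
  intro s hs
  have hq0 : 0 < q := by positivity
  have hs0 : 0 < s := by linarith
  have hInt := conv0_integrand_of_continuous hs0 (rlKer_integrable hγ s) hf.continuousOn
  rw [rlInt_eq_conv0, conv0]
  have hsub : IntervalIntegrable (fun r => rlKer γ (s - r) * f r) volume t₁ q := by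
    refine hInt.mono_set ?_
    rw [uIcc_of_le (by linarith), uIcc_of_le hs0.le]
    exact Icc_subset_Icc ht₁ (by linarith)
  calc _ = ∫ _ in t₁..q, m * s ^ (γ - 1) / Real.Gamma γ * (f t₁ / 2) := by
        rw [intervalIntegral.integral_const, smul_eq_mul, hq]; ring
    _ ≤ ∫ r in t₁..q, rlKer γ (s - r) * f r := by
        refine intervalIntegral.integral_mono_on (by linarith) (by simp) hsub fun r hr => ?_
        have h1 : m * s ^ (γ - 1) ≤ (s - r) ^ (γ - 1) :=
          min_mul_rpow_le hs0 (by linarith [hr.2]) (by linarith [hr.1])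
        have h2 : f t₁ / 2 < f r := hball (by
          rw [Metric.mem_ball, Real.dist_eq, abs_of_nonneg (by linarith [hr.1])]
          linarith [hr.2])
        have : 0 ≤ s - r := by linarith [hr.2]
        unfold rlKer
        gcongr
    _ ≤ _ := by
        refine intervalIntegral.integral_mono_interval ht₁ (by linarith) (by linarith) ?_ hInt
        filter_upwards [self_mem_ae_restrict measurableSet_Ioc] with r hr
        exact mul_nonneg (rlKer_nonneg hγ (by linarith [hr.2])) (hf0 r)

lemma rlInt_nonneg {γ : ℝ} (hγ : 0 < γ) {f : ℝ → ℝ} (hf0 : ∀ s, 0 ≤ f s) {s : ℝ} (hs : 0 ≤ s) :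
    0 ≤ rlInt γ f s := by
  rw [rlInt_eq_conv0, conv0]
  exact intervalIntegral.integral_nonneg hs fun r hr =>
    mul_nonneg (rlKer_nonneg hγ (by linarith [hr.2])) (hf0 r)

/-- `∫₀ˣ K` for `K = reKer θ a (3θ)` grows like `x^θ / (a Γ(θ+1))`, up to a bounded error. -/
lemma integral_reKer_lower {θ a x : ℝ} (ha : 0 < a) (hθ0 : 1 / 2 < θ) (hθ1 : θ < 1) (hx : 0 < x) :
    1 / a * (rlKer (1 + θ) x - 1 / √a) ≤ ∫ s in (0:ℝ)..x, reKer θ a (3 * θ) s := by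
  have h1 := conv0_reKer a (show 0 < θ by linarith) (σ := 3 * θ) (by linarith) one_pos hx
  simp only [conv0, rlKer_one, one_mul] at h1
  have h2 := reKer_add ha (show 0 < θ by linarith) (σ := 1 + θ) (by linarith) hx
  have h3 := abs_le.1 (abs_reKer_one_le ha hθ0 hθ1 hx)
  rw [show 1 + θ + 2 * θ = 3 * θ + 1 by ring, ← h1] at h2
  rw [one_div, inv_mul_le_iff₀ ha]
  linarith [h3.2]

/-- Lower bound for the convolution of a nonnegative kernel with a function that is nonnegative
and at least `c s^e` far out: only the part over `[t/2, t]` is kept. -/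
lemma conv0_lower {K g : ℝ → ℝ} {c e T t : ℝ} (hc : 0 ≤ c) (hT : 0 < T) (ht : 2 * T ≤ t)
    (hK : ∀ s > 0, 0 ≤ K s) (hKi : IntervalIntegrable K volume 0 t)
    (hi : IntervalIntegrable (fun s => K (t - s) * g s) volume 0 t)
    (hg0 : ∀ᵐ s ∂(volume.restrict (Ici (0:ℝ))), 0 ≤ g s)
    (hg : ∀ᵐ s ∂(volume.restrict (Ici (0:ℝ))), T ≤ s → c * s ^ e ≤ g s) :
    c * (min 1 ((1 / 2 : ℝ) ^ e) * t ^ e) * ∫ s in (0:ℝ)..(t / 2), K s ≤ conv0 K g t := by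
  have ht0 : 0 < t := by linarith
  have hne : ∀ᵐ s : ℝ, s ≠ t := by simp [ae_iff]
  rw [ae_restrict_iff' measurableSet_Ici] at hg0 hg
  set m := c * (min 1 ((1 / 2 : ℝ) ^ e) * t ^ e) with hm
  have hsubset : uIcc (t / 2) t ⊆ uIcc 0 t := by
    rw [uIcc_of_le (by linarith), uIcc_of_le ht0.le]
    exact Icc_subset_Icc (by linarith) le_rfl
  calc m * ∫ s in (0:ℝ)..(t / 2), K s = ∫ s in (t / 2)..t, m * K (t - s) := by
        rw [intervalIntegral.integral_const_mul, intervalIntegral.integral_comp_sub_left]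
        congr 2 <;> ring
    _ ≤ ∫ s in (t / 2)..t, K (t - s) * g s := by
        refine intervalIntegral.integral_mono_ae_restrict (by linarith)
          (((intervalIntegrable_comp_sub hKi).mono_set hsubset).const_mul m)
          (hi.mono_set hsubset) ?_
        rw [EventuallyLE, ae_restrict_iff' measurableSet_Icc]
        filter_upwards [hne, hg] with s hst hgs hs
        have h1 := hgs (show (0:ℝ) ≤ s by linarith [hs.1]) (by linarith [hs.1])
        have h2 : m ≤ g s := le_trans (mul_le_mul_of_nonneg_left
          (min_mul_rpow_le ht0 hs.1 hs.2) hc) h1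
        rw [mul_comm]
        exact mul_le_mul_of_nonneg_left h2 (hK _ (sub_pos.2 (lt_of_le_of_ne hs.2 hst)))
    _ ≤ conv0 K g t := by
        refine intervalIntegral.integral_mono_interval (by linarith) (by linarith) le_rfl ?_ hi
        rw [EventuallyLE, ae_restrict_iff' measurableSet_Ioc]
        filter_upwards [hne, hg0] with s hst hgs hs
        exact mul_nonneg (hK _ (sub_pos.2 (lt_of_le_of_ne hs.2 hst))) (hgs hs.1.le)

lemma tendsto_const_mul_rpow_neg (C : ℝ) {e : ℝ} (he : e < 0) :
    Tendsto (fun t : ℝ => C * t ^ e) atTop (nhds 0) := by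
  have := (tendsto_rpow_neg_atTop (show 0 < -e by linarith)).const_mul C
  simpa using this

/-- Growth of `₀I_t^θ w` for `θ = α/2`: the forcing contributes `t^(γ-1) · t^θ`, which dominates
the contributions `O(1)` and `O(t^(1-θ))` of the initial data because `2θ + γ > 2`. -/
lemma half_order_eventually {γ θ p a b : ℝ} {w : ℝ → ℝ}
    (hγ : 0 < γ) (hθ0 : 1 / 2 < θ) (hθ1 : θ < 1) (hp : 1 < p) (ha : 0 < a) (hb : 0 < b)
    (hw : ContDiff ℝ 1 w) (hw0 : ∃ t : ℝ, 0 ≤ t ∧ w t ≠ 0)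
    (hAC : ∀ T > (0:ℝ), AC2On (capKernel (2 * θ) w) T)
    (hineq : ∀ᵐ t ∂(volume.restrict (Ici (0:ℝ))),
      caputoD (2 * θ) w t + a * w t ≥ b * rlInt γ (fun s => |w s| ^ p) t)
    (hαγ : 2 < 2 * θ + γ) :
    ∃ c > 0, ∀ᶠ t in atTop, c * t ^ (γ + θ - 1) ≤ conv0 (rlKer θ) w t := by
  obtain ⟨t₁, ht₁, hwt⟩ := hw0
  have hf : Continuous (fun s => |w s| ^ p) :=
    hw.continuous.abs.rpow_const fun _ => Or.inr (by linarith)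
  have hf0 : ∀ s, 0 ≤ |w s| ^ p := fun s => by positivity
  obtain ⟨c, hc, T, hT, hlow⟩ := rlInt_lower hγ hf hf0 ht₁ (by positivity)
  set m := min 1 ((1 / 2 : ℝ) ^ (γ - 1)) with hm
  have hm0 : 0 < m := lt_min one_pos (by positivity)
  have hG := Real.Gamma_pos_of_pos (show 0 < 1 + θ by linarith)
  set A := b * c * m * (1 / a * ((1 / 2) ^ θ / Real.Gamma (1 + θ))) with hA
  have hA0 : 0 < A := by positivity
  set B := b * c * m * (1 / a * (1 / √a)) with hB
  set E := |deriv w 0| * (2 / a / Real.Gamma (2 - θ)) with hE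
  have hbound : ∀ t ≥ 2 * T,
      A * t ^ (γ + θ - 1) - B * t ^ (γ - 1) - |w 0| * (1 / √a) - E * t ^ (1 - θ)
        ≤ conv0 (rlKer θ) w t := by
    intro t ht
    have ht0 : 0 < t := by linarith
    rw [representation ha hθ0 hθ1 hw hAC ht0]
    have iK := reKer_integrable a (show 0 < θ by linarith) (σ := 3 * θ) (by linarith) ht0
    have bK : ∀ s ∈ Ioo 0 t, |reKer θ a (3 * θ) s| ≤ rlKer (3 * θ) t := fun s hs =>
      (abs_reKer_le hθ0 hθ1 (by linarith) hs.1).trans (rlKer_mono (by linarith) hs.1.le hs.2.le)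
    have hgi : IntervalIntegrable (fun s => caputoD (2 * θ) w s + a * w s) volume 0 t :=
      (hAC t ht0).2.1.add ((hw.continuous.intervalIntegrable _ _).const_mul a)
    have hmain := conv0_lower (c := b * c) (e := γ - 1) (by positivity) hT ht
      (fun s hs => reKer_nonneg ha hθ0 hθ1 hs) iK
      (conv0_integrand_of_bounded ht0 iK bK hgi)
      (by
        filter_upwards [hineq, self_mem_ae_restrict measurableSet_Ici] with s hs hs0
        exact le_trans (mul_nonneg hb.le (rlInt_nonneg hγ hf0 hs0)) hs)
      (by
        filter_upwards [hineq] with s hs hsT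
        refine le_trans ?_ hs
        rw [mul_assoc]
        exact mul_le_mul_of_nonneg_left (hlow s hsT) hb.le)
    have hInt := integral_reKer_lower ha hθ0 hθ1 (half_pos ht0)
    have hmul := (mul_le_mul_of_nonneg_left hInt
      (show 0 ≤ b * c * (m * t ^ (γ - 1)) by positivity)).trans hmain
    have e1 : rlKer (1 + θ) (t / 2) = (1 / 2) ^ θ / Real.Gamma (1 + θ) * t ^ θ := by
      rw [rlKer, show 1 + θ - 1 = θ by ring, show t / 2 = 1 / 2 * t by ring,
        Real.mul_rpow (by norm_num) ht0.le]
      ring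
    have e2 : t ^ (γ + θ - 1) = t ^ (γ - 1) * t ^ θ := by
      rw [← Real.rpow_add ht0]; congr 1; ring
    have l1 : -(|w 0| * (1 / √a)) ≤ w 0 * reKer θ a (1 + θ) t := by
      refine (abs_le.1 ?_).1
      rw [abs_mul]
      exact mul_le_mul_of_nonneg_left (abs_reKer_one_le ha hθ0 hθ1 ht0) (abs_nonneg _)
    have l2 : -(E * t ^ (1 - θ)) ≤ deriv w 0 * reKer θ a (2 + θ) t := by
      refine (abs_le.1 ?_).1
      rw [abs_mul]
      refine (mul_le_mul_of_nonneg_left (abs_reKer_two_le ha hθ0 hθ1 ht0)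
        (abs_nonneg _)).trans (le_of_eq ?_)
      rw [rlKer, hE, show 2 - θ - 1 = 1 - θ by ring]; ring
    have e3 : A * t ^ (γ + θ - 1) - B * t ^ (γ - 1) = b * c * (m * t ^ (γ - 1)) *
        (1 / a * (rlKer (1 + θ) (t / 2) - 1 / √a)) := by
      rw [e1, e2, hA, hB]; ring
    linarith
  refine ⟨A / 2, by positivity, ?_⟩
  have hlim : Tendsto (fun t : ℝ => A - B * t ^ (-θ) - |w 0| * (1 / √a) * t ^ (1 - γ - θ)
      - E * t ^ (2 - 2 * θ - γ)) atTop (nhds A) := by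
    have := ((tendsto_const_nhds (x := A)).sub
      (tendsto_const_mul_rpow_neg B (show -θ < 0 by linarith))).sub
      (tendsto_const_mul_rpow_neg (|w 0| * (1 / √a)) (show 1 - γ - θ < 0 by linarith))|>.sub
      (tendsto_const_mul_rpow_neg E (show 2 - 2 * θ - γ < 0 by linarith))
    simpa using this
  filter_upwards [hlim.eventually_const_lt (show A / 2 < A by linarith),
    eventually_ge_atTop (2 * T)] with t h1 h2
  have ht0 : 0 < t := by linarith
  refine le_trans ?_ (hbound t h2)
  refine (mul_le_mul_of_nonneg_right h1.le (by positivity)).trans (le_of_eq ?_)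
  have x1 : t ^ (-θ) * t ^ (γ + θ - 1) = t ^ (γ - 1) := by
    rw [← Real.rpow_add ht0]; congr 1; ring
  have x2 : t ^ (1 - γ - θ) * t ^ (γ + θ - 1) = 1 := by
    rw [← Real.rpow_add ht0, show 1 - γ - θ + (γ + θ - 1) = 0 by ring, Real.rpow_zero]
  have x3 : t ^ (2 - 2 * θ - γ) * t ^ (γ + θ - 1) = t ^ (1 - θ) := by
    rw [← Real.rpow_add ht0]; congr 1; ring
  linear_combination (-B) * x1 - |w 0| * (1 / √a) * x2 - E * x3

lemma abs_conv0_rlKer_le {θ M t : ℝ} {w : ℝ → ℝ} (hθ : 0 < θ) (ht : 0 < t)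
    (hM : ∀ s ∈ Icc 0 t, |w s| ≤ M) : |conv0 (rlKer θ) w t| ≤ M * rlKer (1 + θ) t := by
  rw [← conv0_rlKer one_pos hθ ht, conv0, conv0, ← intervalIntegral.integral_const_mul,
    ← Real.norm_eq_abs]
  refine intervalIntegral.norm_integral_le_of_norm_le ht.le
    (Eventually.of_forall fun s hs => ?_)
    ((rlKer_conv_integrable (σ := 1) (τ := θ) one_pos hθ ht).const_mul M)
  have h1 := rlKer_nonneg (σ := θ) hθ (t := t - s) (by linarith [hs.2])
  rw [norm_mul, Real.norm_of_nonneg h1, rlKer_one, mul_one, mul_comm]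
  exact mul_le_mul_of_nonneg_right (hM s ⟨hs.1.le, hs.2⟩) h1

/-- A lower bound that holds eventually holds on all of `(0, ∞)` up to an additive constant. -/
lemma conv0_global_lower {θ c e : ℝ} {w : ℝ → ℝ} (hθ : 0 < θ) (hc : 0 < c) (he : 0 ≤ e)
    (hw : Continuous w) (h : ∀ᶠ t in atTop, c * t ^ e ≤ conv0 (rlKer θ) w t) :
    ∃ C, ∀ t > 0, c * t ^ e - C ≤ conv0 (rlKer θ) w t := by
  obtain ⟨T₀, hT₀⟩ := eventually_atTop.1 h
  set T := max T₀ 1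
  have hT : 0 < T := lt_of_lt_of_le one_pos (le_max_right _ _)
  obtain ⟨M, hM⟩ := (isCompact_Icc (a := (0:ℝ)) (b := T)).exists_bound_of_continuousOn
    hw.continuousOn
  have hM0 : 0 ≤ M := (norm_nonneg _).trans (hM 0 ⟨le_rfl, hT.le⟩)
  have hr := rlKer_nonneg (σ := 1 + θ) (by linarith) hT.le
  refine ⟨c * T ^ e + M * rlKer (1 + θ) T, fun t ht => ?_⟩
  rcases le_total T t with hTt | htT
  · have h1 := hT₀ t ((le_max_left _ _).trans hTt)
    have h2 : 0 ≤ c * T ^ e + M * rlKer (1 + θ) T := by positivity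
    linarith
  · have h1 := abs_conv0_rlKer_le hθ ht (M := M) fun s hs => hM s ⟨hs.1, hs.2.trans htT⟩
    have h2 : M * rlKer (1 + θ) t ≤ M * rlKer (1 + θ) T :=
      mul_le_mul_of_nonneg_left (rlKer_mono (by linarith) ht.le htT) hM0
    have h3 : c * t ^ e ≤ c * T ^ e := by gcongr
    linarith [(abs_le.1 h1).1]

/-- Integrating the lower bound for `₀I_t^θ w` a further `δ` times. -/
lemma rlInt_lower_of_lower {θ δ c C μ : ℝ} {w : ℝ → ℝ} (hθ : 0 < θ) (hδ : 0 ≤ δ) (hc : 0 < c)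
    (hμ : 0 < μ) (hw : Continuous w)
    (h : ∀ t > 0, c * t ^ (μ - 1) - C ≤ conv0 (rlKer θ) w t) :
    ∃ c' > 0, ∃ C', ∀ t > 0, c' * t ^ (μ + δ - 1) - C' * t ^ δ ≤ rlInt (θ + δ) w t := by
  rcases hδ.eq_or_lt with rfl | hδ
  · refine ⟨c, hc, C, fun t ht => ?_⟩
    rw [rlInt_eq_conv0]
    simpa using h t ht
  have hG := Real.Gamma_pos_of_pos hμ
  have hG1 := Real.Gamma_pos_of_pos (show 0 < μ + δ by linarith)
  refine ⟨c * Real.Gamma μ / Real.Gamma (μ + δ), by positivity, C / Real.Gamma (1 + δ),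
    fun t ht => ?_⟩
  obtain ⟨M, hM⟩ := (isCompact_Icc (a := (0:ℝ)) (b := t)).exists_bound_of_continuousOn
    hw.continuousOn
  have iw := hw.intervalIntegrable (μ := volume) 0 t
  have iθ := rlKer_integrable hθ t
  have iδ := rlKer_integrable hδ t
  have hsemi : rlInt (θ + δ) w t = conv0 (rlKer δ) (conv0 (rlKer θ) w) t := by
    calc rlInt (θ + δ) w t = conv0 w (rlKer (θ + δ)) t := by rw [rlInt_eq_conv0, conv0_comm]
      _ = conv0 w (conv0 (rlKer θ) (rlKer δ)) t := by
          refine conv0_congr ht.le (fun _ _ => rfl) (Eventually.of_forall fun s hs => ?_)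
          rw [conv0_rlKer hδ hθ hs.1, add_comm]
      _ = conv0 (conv0 w (rlKer θ)) (rlKer δ) t :=
          conv0_assoc ht iw (fun s hs => hM s ⟨hs.1.le, hs.2.le⟩) iθ iδ
      _ = _ := by rw [conv0_comm, funext (conv0_comm w _)]
  have hi : IntervalIntegrable (fun s => rlKer δ (t - s) * conv0 (rlKer θ) w s) volume 0 t := by
    have hM0 : 0 ≤ M := (norm_nonneg _).trans (hM 0 ⟨le_rfl, ht.le⟩)
    have hb : ∀ s ∈ Ioo 0 t, |conv0 (rlKer θ) w s| ≤ M * rlKer (1 + θ) t := fun s hs =>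
      (abs_conv0_rlKer_le hθ hs.1 fun r hr => hM r ⟨hr.1, hr.2.trans hs.2.le⟩).trans
        (mul_le_mul_of_nonneg_left (rlKer_mono (by linarith) hs.1.le hs.2.le) hM0)
    have := intervalIntegrable_comp_sub
      (conv0_integrand_of_bounded ht (conv0_integrable ht iθ iw) hb iδ)
    simpa [mul_comm] using this
  have e1 : c * Real.Gamma μ / Real.Gamma (μ + δ) * t ^ (μ + δ - 1)
      - C / Real.Gamma (1 + δ) * t ^ δ
      = c * Real.Gamma μ * rlKer (μ + δ) t - C * rlKer (1 + δ) t := by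
    rw [rlKer, rlKer, add_sub_cancel_left]; ring
  have iμ := rlKer_conv_integrable hμ hδ ht
  have i1 := rlKer_conv_integrable one_pos hδ ht
  rw [hsemi, e1, ← conv0_rlKer hμ hδ ht, ← conv0_rlKer one_pos hδ ht, conv0, conv0, conv0,
    ← intervalIntegral.integral_const_mul, ← intervalIntegral.integral_const_mul,
    ← intervalIntegral.integral_sub (iμ.const_mul _) (i1.const_mul _)]
  refine intervalIntegral.integral_mono_on_of_le_Ioo ht.le
    ((iμ.const_mul _).sub (i1.const_mul _)) hi fun s hs => ?_
  have h1 := rlKer_nonneg (σ := δ) hδ (t := t - s) (by linarith [hs.2])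
  refine le_trans (le_of_eq ?_) (mul_le_mul_of_nonneg_left (h s hs.1) h1)
  rw [rlKer_one, rlKer.eq_1 μ s]
  field_simp

/-- Corollary 2.5 (v): for β ∈ [α/2, α), if α+γ > 2 then liminf t^{1−γ−β} (₀I_t^β w)(t) > 0. -/
theorem cor_liminf_pos_v
    (γ α p a b : ℝ) (w : ℝ → ℝ)
    (hγ : 0 < γ) (hα1 : 1 < α) (hα2 : α < 2) (hp : 1 < p) (ha : 0 < a) (hb : 0 < b)
    (hw : ContDiff ℝ 1 w)
    (hw0 : ∃ t : ℝ, 0 ≤ t ∧ w t ≠ 0)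
    (hAC : ∀ T > (0:ℝ), AC2On (capKernel α w) T)
    (hineq : ∀ᵐ t ∂(volume.restrict (Set.Ici (0:ℝ))),
      caputoD α w t + a * w t ≥ b * rlInt γ (fun s => |w s| ^ p) t)
    (β : ℝ) (hβ1 : α / 2 ≤ β) (hβ2 : β < α) (hαγ : 2 < α + γ) :
    0 < liminf (fun t : ℝ => ((t ^ (1 - γ - β) * rlInt β w t : ℝ) : EReal)) atTop := by
  obtain ⟨θ, rfl⟩ : ∃ θ, α = 2 * θ := ⟨α / 2, by ring⟩
  obtain ⟨δ, rfl⟩ : ∃ δ, β = θ + δ := ⟨β - θ, by ring⟩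
  obtain ⟨c, hc, hev⟩ := half_order_eventually hγ (by linarith) (by linarith) hp ha hb hw hw0 hAC
    hineq hαγ
  obtain ⟨C, hC⟩ := conv0_global_lower (by linarith) hc (by linarith) hw.continuous hev
  obtain ⟨c', hc', C', hlow⟩ := rlInt_lower_of_lower (μ := γ + θ) (δ := δ) (by linarith)
    (by linarith) hc (by linarith) hw.continuous hC
  have hlim : Tendsto (fun t : ℝ => c' - C' * t ^ (1 - γ - θ)) atTop (nhds c') := by
    simpa using (tendsto_const_nhds (x := c')).sub
      (tendsto_const_mul_rpow_neg C' (show 1 - γ - θ < 0 by linarith))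
  refine lt_of_lt_of_le (b := ((c' / 2 : ℝ) : EReal)) (by exact_mod_cast half_pos hc') ?_
  refine le_liminf_of_le (by isBoundedDefault) ?_
  filter_upwards [hlim.eventually_const_lt (show c' / 2 < c' by linarith),
    eventually_gt_atTop 0] with t h1 ht
  rw [EReal.coe_le_coe_iff]
  refine h1.le.trans (le_trans (le_of_eq ?_)
    (mul_le_mul_of_nonneg_left (hlow t ht) (Real.rpow_nonneg ht.le _)))
  have x1 : t ^ (1 - γ - (θ + δ)) * t ^ (γ + θ + δ - 1) = 1 := by
    rw [← Real.rpow_add ht, show 1 - γ - (θ + δ) + (γ + θ + δ - 1) = 0 by ring, Real.rpow_zero]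
  have x2 : t ^ (1 - γ - (θ + δ)) * t ^ δ = t ^ (1 - γ - θ) := by
    rw [← Real.rpow_add ht]; congr 1; ring
  linear_combination (-c') * x1 + C' * x2
end

section
/- Let γ > 0, p > 1, a > 0, b > 0. There exist positive constants K₁ and K₂, depending only on γ, p, a, b but not on T, such that: for every T > 0 and every twice continuously differentiable function w on [0,T] with w ≢ 0 satisfying, for almost every t ∈ [0,T], w''(t) + a·w(t) ≥ b·(₀I_t^γ (|w|^p))(t), the inequality T·w'(0) + w(0) ≤ K₁·T^{2+γ−pγ/(p−1)} + K₂·T^{−(2+γ)/(p−1)} holds. -/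
/-!
The proof is the test function method. Let `u = 1 - t/T` and let `ψ` be `testFn n T`, a nonnegative
polynomial behaving like `u^{n+2}` near `t = T`, with `ψ(0) = 1` and `ψ'(0) = -1/T`. Multiplying the
differential inequality by `ψ`, integrating by parts twice on the left and using fractional
integration by parts (`rl_fubini`) on the right gives

`w'(0) + w(0)/T ≤ ∫₀ᵀ ( w (ψ'' + a ψ) - (b/Γ(γ)) |w|^p Φ ) ds`,
where `Φ(s) = ∫ₛᵀ (t - s)^{γ-1} ψ(t) dt ≥ c T^γ u(s)^{n+2+γ}` by `rl_lower`.

Since `|ψ''| ≤ M T^{-2} u^n` and `0 ≤ ψ ≤ (n+2) u^{n+2}`, Young's inequality absorbs the linear terms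
into the `|w|^p` term (`pointwise_bound`). For `n ≥ (2+γ)/(p-1)` the powers of `u` in the remainders
are nonnegative, so the integrand is at most
`K₂ T^{-2-(2+γ)/(p-1)} + K₁ T^{-γ/(p-1)}`; integrating over `[0,T]` and multiplying by `T` gives the
claim.
-/

open MeasureTheory Filter

/-- Young's inequality `yA ≤ B y^p + C A^{p'} B^{1-p'}` with the non-sharp constant `C = 1`, the
remainder being written as `A (A/B)^{1/(p-1)}`. It follows by comparing `A` with `B y^{p-1}`. -/
theorem young_like {p y A B : ℝ} (hp : 1 < p) (hy : 0 ≤ y) (hA : 0 ≤ A) (hB : 0 < B) :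
    y * A ≤ B * y ^ p + A * (A / B) ^ (1 / (p - 1)) := by
  have hp1 : 0 < p - 1 := by linarith
  have hAB : 0 ≤ A / B := by positivity
  have e : y * y ^ (p - 1) = y ^ p := by
    rcases hy.eq_or_lt with h | h
    · subst h; rw [zero_mul, Real.zero_rpow (by linarith)]
    · nth_rw 1 [← Real.rpow_one y]; rw [← Real.rpow_add h]; congr 1; ring
  rcases le_total A (B * y ^ (p - 1)) with h | h
  · have h1 : y * A ≤ y * (B * y ^ (p - 1)) := mul_le_mul_of_nonneg_left h hy
    have h2 : y * (B * y ^ (p - 1)) = B * y ^ p := by rw [← e]; ring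
    have h3 : 0 ≤ A * (A / B) ^ (1 / (p - 1)) := by positivity
    linarith
  · have h1 : y ≤ (A / B) ^ (1 / (p - 1)) := by
      have h2 : y ^ (p - 1) ≤ A / B := by rw [le_div_iff₀ hB]; linarith
      calc y = (y ^ (p - 1)) ^ (1 / (p - 1)) := by
            rw [← Real.rpow_mul hy, mul_one_div_cancel hp1.ne', Real.rpow_one]
        _ ≤ _ := Real.rpow_le_rpow (by positivity) h2 (by positivity)
    have h3 : y * A ≤ A * (A / B) ^ (1 / (p - 1)) := by
      rw [mul_comm]; exact mul_le_mul_of_nonneg_left h1 hA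
    have h4 : 0 ≤ B * y ^ p := by positivity
    linarith

/-- Fractional integration by parts: the adjoint of the left-sided Riemann–Liouville integral is
the right-sided one. Integrability of the kernel `(t - s)^{γ-1}` on the triangle `s < t` comes from
viewing the double integrand as that of a convolution. -/
theorem rl_fubini {γ T : ℝ} (hγ : 0 < γ) {h ψ : ℝ → ℝ}
    (hh : Continuous h) (hψ : Continuous ψ) :
    IntegrableOn (fun t => ψ t * ∫ s in (0:ℝ)..t, (t - s) ^ (γ - 1) * h s) (Set.Ioc 0 T) ∧
    IntegrableOn (fun s => h s * ∫ t in s..T, (t - s) ^ (γ - 1) * ψ t) (Set.Ioc 0 T) ∧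
    ∫ t in Set.Ioc 0 T, (ψ t * ∫ s in (0:ℝ)..t, (t - s) ^ (γ - 1) * h s) =
    ∫ s in Set.Ioc 0 T, (h s * ∫ t in s..T, (t - s) ^ (γ - 1) * ψ t) := by
  set f : ℝ → ℝ := (Set.Ioc 0 T).indicator h with hf
  set k : ℝ → ℝ := (Set.Ioc 0 T).indicator (fun x => x ^ (γ - 1)) with hk
  set g : ℝ → ℝ := (Set.Ioc 0 T).indicator ψ with hg
  have fint : Integrable f :=
    (integrable_indicator_iff measurableSet_Ioc).2
      ((hh.integrableOn_Icc).mono_set Set.Ioc_subset_Icc_self)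
  have kint : Integrable k := by
    refine (integrable_indicator_iff measurableSet_Ioc).2 ?_
    rcases le_total 0 T with hT | hT
    · exact (intervalIntegrable_iff_integrableOn_Ioc_of_le hT).1
        (intervalIntegral.intervalIntegrable_rpow' (by linarith))
    · simp [Set.Ioc_eq_empty_of_le hT]
  have hconv : Integrable (fun q : ℝ × ℝ => f q.2 * k (q.1 - q.2)) (volume.prod volume) :=
    fint.convolution_integrand (ContinuousLinearMap.mul ℝ ℝ) kint
  obtain ⟨C, hC⟩ := (isCompact_Icc (a := (0:ℝ)) (b := T)).exists_bound_of_continuousOn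
    hψ.continuousOn
  have hH : Integrable (fun q : ℝ × ℝ => g q.1 * (f q.2 * k (q.1 - q.2)))
      (volume.prod volume) := by
    refine hconv.bdd_mul (c := max C 0) ?_ ?_
    · exact ((hψ.measurable.indicator measurableSet_Ioc).comp measurable_fst).aestronglyMeasurable
    · refine Eventually.of_forall fun q => ?_
      by_cases hq : q.1 ∈ Set.Ioc 0 T
      · simp only [hg, Set.indicator_of_mem hq]
        exact (hC _ (Set.Ioc_subset_Icc_self hq)).trans (le_max_left _ _)
      · simp [hg, Set.indicator_of_notMem hq]
  have h1 : (fun t => ∫ s, g t * (f s * k (t - s))) = (Set.Ioc 0 T).indicator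
      (fun t => ψ t * ∫ s in (0:ℝ)..t, (t - s) ^ (γ - 1) * h s) := by
    funext t
    by_cases ht : t ∈ Set.Ioc 0 T
    · rw [Set.indicator_of_mem ht, integral_const_mul, intervalIntegral.integral_of_le ht.1.le,
        integral_Ioc_eq_integral_Ioo, ← integral_indicator measurableSet_Ioo]
      simp only [hg, Set.indicator_of_mem ht]
      congr 2
      funext s
      by_cases hs : s ∈ Set.Ioo 0 t
      · have m1 : s ∈ Set.Ioc 0 T := ⟨hs.1, hs.2.le.trans ht.2⟩
        have m2 : t - s ∈ Set.Ioc 0 T := ⟨by linarith [hs.2], by linarith [hs.1, ht.2]⟩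
        rw [Set.indicator_of_mem hs, hf, hk, Set.indicator_of_mem m1, Set.indicator_of_mem m2,
          mul_comm]
      · rw [Set.indicator_of_notMem hs]
        by_cases m1 : s ∈ Set.Ioc 0 T
        · have m2 : t - s ∉ Set.Ioc 0 T := fun m => hs ⟨m1.1, by linarith [m.1]⟩
          simp [hk, Set.indicator_of_notMem m2]
        · simp [hf, Set.indicator_of_notMem m1]
    · simp [hg, Set.indicator_of_notMem ht]
  have h2 : (fun s => ∫ t, g t * (f s * k (t - s))) = (Set.Ioc 0 T).indicator
      (fun s => h s * ∫ t in s..T, (t - s) ^ (γ - 1) * ψ t) := by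
    funext s
    by_cases hs : s ∈ Set.Ioc 0 T
    · rw [Set.indicator_of_mem hs, intervalIntegral.integral_of_le hs.2,
        ← integral_indicator measurableSet_Ioc, ← integral_const_mul]
      congr 1
      funext t
      simp only [hf, Set.indicator_of_mem hs]
      by_cases ht : t ∈ Set.Ioc s T
      · have m1 : t ∈ Set.Ioc 0 T := ⟨hs.1.trans ht.1, ht.2⟩
        have m2 : t - s ∈ Set.Ioc 0 T := ⟨by linarith [ht.1], by linarith [hs.1, ht.2]⟩
        rw [Set.indicator_of_mem ht, hg, hk, Set.indicator_of_mem m1, Set.indicator_of_mem m2]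
        ring
      · rw [Set.indicator_of_notMem ht]
        by_cases m1 : t ∈ Set.Ioc 0 T
        · have m2 : t - s ∉ Set.Ioc 0 T := fun m => ht ⟨by linarith [m.1], m1.2⟩
          simp [hk, Set.indicator_of_notMem m2]
        · simp [hg, Set.indicator_of_notMem m1]
    · simp [hf, Set.indicator_of_notMem hs]
  refine ⟨?_, ?_, ?_⟩
  · rw [← integrable_indicator_iff measurableSet_Ioc, ← h1]
    exact hH.integral_prod_left
  · rw [← integrable_indicator_iff measurableSet_Ioc, ← h2]
    exact hH.integral_prod_right
  · rw [← integral_indicator measurableSet_Ioc, ← integral_indicator measurableSet_Ioc, ← h1, ← h2]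
    exact integral_integral_swap hH

/-- Lower bound for the right-sided fractional integral of a function dominating `(1 - t/T)^m`,
obtained by integrating over the left half of `[s, T]` only. -/
theorem rl_lower {γ T s : ℝ} (hγ : 0 < γ) (hT : 0 < T) (hs : 0 ≤ s) (hsT : s ≤ T) (m : ℕ)
    {ψ : ℝ → ℝ} (hψ : Continuous ψ) (hlow : ∀ t ∈ Set.Icc 0 T, (1 - t / T) ^ m ≤ ψ t) :
    (1 / 2) ^ m * (1 / 2) ^ γ / γ * T ^ γ * ((1 - s / T) ^ m * (1 - s / T) ^ γ) ≤
      ∫ t in s..T, (t - s) ^ (γ - 1) * ψ t := by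
  have hu : 0 ≤ 1 - s / T := by rw [sub_nonneg, div_le_one hT]; exact hsT
  have hker : ∀ c, IntervalIntegrable (fun t => (t - s) ^ (γ - 1)) volume s c := fun c => by
    have := (intervalIntegral.intervalIntegrable_rpow' (a := 0) (b := c - s) (r := γ - 1)
      (by linarith)).comp_sub_right s
    simpa using this
  have hi : ∀ c, IntervalIntegrable (fun t => (t - s) ^ (γ - 1) * ψ t) volume s c := fun c =>
    (hker c).mul_continuousOn hψ.continuousOn
  have h0 : ∀ t ∈ Set.Icc s T, 0 ≤ (t - s) ^ (γ - 1) * ψ t := fun t ht => by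
    have h1 : 0 ≤ 1 - t / T := by rw [sub_nonneg, div_le_one hT]; exact ht.2
    have := hlow t ⟨hs.trans ht.1, ht.2⟩
    have h2 : 0 ≤ t - s := by linarith [ht.1]
    have h3 : 0 ≤ ψ t := le_trans (by positivity) this
    positivity
  have hmid : s ≤ (s + T) / 2 := by linarith
  have hmid' : (s + T) / 2 ≤ T := by linarith
  have e1 : ∫ t in s..((s + T) / 2), (t - s) ^ (γ - 1) * ((1 / 2) * (1 - s / T)) ^ m =
      (1 / 2) ^ m * (1 / 2) ^ γ / γ * T ^ γ * ((1 - s / T) ^ m * (1 - s / T) ^ γ) := by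
    rw [intervalIntegral.integral_mul_const,
      intervalIntegral.integral_comp_sub_right (fun x => x ^ (γ - 1)), integral_rpow (by left; linarith)]
    have : (s + T) / 2 - s = 1 / 2 * (T * (1 - s / T)) := by field_simp; ring
    rw [this, sub_add_cancel, sub_self, Real.zero_rpow hγ.ne',
      Real.mul_rpow (by norm_num) (by positivity), Real.mul_rpow hT.le hu, mul_pow]
    ring
  rw [← e1]
  calc _ ≤ ∫ t in s..((s + T) / 2), (t - s) ^ (γ - 1) * ψ t := by
        refine intervalIntegral.integral_mono_on hmid ((hker _).mul_const _) (hi _) fun t ht => ?_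
        refine mul_le_mul_of_nonneg_left ?_ (Real.rpow_nonneg (by linarith [ht.1]) _)
        refine le_trans ?_ (hlow t ⟨hs.trans ht.1, ht.2.trans hmid'⟩)
        refine pow_le_pow_left₀ (by positivity) ?_ m
        have : t / T ≤ (s + T) / 2 / T := by gcongr; exact ht.2
        have e : (s + T) / 2 / T = 1 / 2 * (s / T) + 1 / 2 := by field_simp
        linarith
    _ ≤ _ := by
        rw [intervalIntegral.integral_of_le hmid, intervalIntegral.integral_of_le hsT]
        refine setIntegral_mono_set ((intervalIntegrable_iff_integrableOn_Ioc_of_le hsT).1 (hi T)) ?_ ?_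
        · filter_upwards [ae_restrict_mem measurableSet_Ioc] with t ht
          exact h0 t (Set.Ioc_subset_Icc_self ht)
        · exact (Set.Ioc_subset_Ioc_right hmid').eventuallyLE

/-- The remainder of `young_like` for `A = N T^{-j} u^k` and `B = β T^γ u^{k+j+γ}`, where
`u = 1 - t/T`: the net power of `u` is nonnegative when `k ≥ (j + γ) r`, so only the power of `T`
survives. It is used with `j = 2` for the second derivative of the test function and with `j = 0`
for the test function itself. -/
theorem young_remainder_bound {N β T u γ r : ℝ} (j k : ℕ) (hN : 0 < N) (hβ : 0 < β) (hT : 0 < T)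
    (hu : 0 < u) (hu1 : u ≤ 1) (hk : (j + γ) * r ≤ k) :
    N * T ^ (-(j : ℝ)) * u ^ k *
        (N * T ^ (-(j : ℝ)) * u ^ k / (β * T ^ γ * (u ^ (k + j) * u ^ γ))) ^ r ≤
      N * (N / β) ^ r * (T ^ (-(j : ℝ)) * T ^ (-(j + γ) * r)) := by
  have e : N * T ^ (-(j : ℝ)) * u ^ k / (β * T ^ γ * (u ^ (k + j) * u ^ γ)) =
      N / β * (T ^ (-(j + γ)) * u ^ (-(j + γ))) := by
    rw [neg_add, Real.rpow_add hT, Real.rpow_add hu, Real.rpow_neg hT.le γ, Real.rpow_neg hu.le γ,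
      Real.rpow_neg hu.le j, Real.rpow_natCast, pow_add]
    field_simp
  rw [e, Real.mul_rpow (by positivity) (by positivity), Real.mul_rpow (by positivity) (by positivity),
    ← Real.rpow_mul hT.le, ← Real.rpow_mul hu.le]
  have h1 : u ^ k * u ^ (-(j + γ) * r) ≤ 1 := by
    rw [← Real.rpow_natCast u k, ← Real.rpow_add hu]
    exact Real.rpow_le_one hu.le hu1 (by linarith)
  calc _ = N * (N / β) ^ r * (T ^ (-(j : ℝ)) * T ^ (-(j + γ) * r)) *
        (u ^ k * u ^ (-(j + γ) * r)) := by ring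
    _ ≤ _ := mul_le_of_le_one_right (by positivity) h1

/-- Pointwise absorption of the linear terms by `|y|^p Φ`: each of `y ψ₂` and `a y ψ` is absorbed
by one half of `Φ`, at the cost of a remainder that does not depend on `u`. -/
theorem pointwise_bound {p γ a β M N T u y ψ ψ₂ Φ : ℝ} (n : ℕ) (hp : 1 < p)
    (ha : 0 < a) (hβ : 0 < β) (hM : 0 < M) (hN : 0 < N) (hT : 0 < T) (hu : 0 < u) (hu1 : u ≤ 1)
    (hn : (2 + γ) * (1 / (p - 1)) ≤ n)
    (hψ₂ : |ψ₂| ≤ M * T ^ (-2 : ℝ) * u ^ n) (hψ : |ψ| ≤ N * u ^ (n + 2))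
    (hΦ : 2 * (β * T ^ γ * (u ^ (n + 2) * u ^ γ)) ≤ Φ) :
    y * (ψ₂ + a * ψ) - |y| ^ p * Φ ≤
      M * (M / β) ^ (1 / (p - 1)) * (T ^ (-2 : ℝ) * T ^ (-(2 + γ) * (1 / (p - 1)))) +
      a * N * (a * N / β) ^ (1 / (p - 1)) * T ^ (-γ * (1 / (p - 1))) := by
  have hr : 0 < 1 / (p - 1) := one_div_pos.2 (by linarith)
  have hB : 0 < β * T ^ γ * (u ^ (n + 2) * u ^ γ) := by positivity
  have y1 := young_like (y := |y|) (A := M * T ^ (-2 : ℝ) * u ^ n) hp (abs_nonneg y)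
    (by positivity) hB
  have y2 := young_like (y := |y|) (A := a * N * u ^ (n + 2)) hp (abs_nonneg y)
    (by positivity) hB
  have r1 := young_remainder_bound (r := 1 / (p - 1)) (γ := γ) 2 n hM hβ hT hu hu1
    (by exact_mod_cast hn)
  have r2 := young_remainder_bound (r := 1 / (p - 1)) (γ := γ) 0 (n + 2) (mul_pos ha hN) hβ hT
    hu hu1 (by push_cast; nlinarith)
  norm_num at r1 r2
  norm_num at y1 y2 ⊢
  have t1 : y * (ψ₂ + a * ψ) ≤ |y| * (M * T ^ (-2 : ℝ) * u ^ n) + |y| * (a * N * u ^ (n + 2)) := by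
    have : y * (ψ₂ + a * ψ) ≤ |y| * (|ψ₂| + a * |ψ|) := by
      refine (le_abs_self _).trans ?_
      rw [abs_mul]
      gcongr
      refine (abs_add_le _ _).trans_eq ?_
      rw [abs_mul, abs_of_pos ha]
    refine this.trans ?_
    rw [← mul_add, mul_assoc a]
    gcongr
  have t2 : |y| ^ p * (2 * (β * T ^ γ * (u ^ (n + 2) * u ^ γ))) ≤ |y| ^ p * Φ := by gcongr
  norm_num at t1
  linarith

/-- The test function `(n+2) u^{n+2} - (n+1) u^{n+3} = u^{n+2} (1 + (n+1) t/T)` with `u = 1 - t/T`.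
The second factor is chosen so that the value at `0` is `1` and the derivative at `0` is `-1/T`,
which makes the boundary term exactly `w'(0) + w(0)/T`. -/
noncomputable def testFn (n : ℕ) (T t : ℝ) : ℝ :=
  (n + 2) * (1 - t / T) ^ (n + 2) - (n + 1) * (1 - t / T) ^ (n + 3)

/-- The first derivative of `testFn n T`. -/
noncomputable def testFn₁ (n : ℕ) (T t : ℝ) : ℝ :=
  -((n + 2) ^ 2 * (1 - t / T) ^ (n + 1) - (n + 1) * (n + 3) * (1 - t / T) ^ (n + 2)) / T

/-- The second derivative of `testFn n T`. -/
noncomputable def testFn₂ (n : ℕ) (T t : ℝ) : ℝ :=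
  ((n + 2) ^ 2 * (n + 1) * (1 - t / T) ^ n
    - (n + 1) * (n + 3) * (n + 2) * (1 - t / T) ^ (n + 1)) / T ^ 2

theorem hasDerivAt_one_sub_div_pow (k : ℕ) (T t : ℝ) :
    HasDerivAt (fun t => (1 - t / T) ^ (k + 1)) (-((k + 1) * (1 - t / T) ^ k) / T) t := by
  have h := (((hasDerivAt_id t).div_const T).const_sub 1).pow (k + 1)
  refine h.congr_deriv ?_
  simp
  ring

theorem hasDerivAt_testFn (n : ℕ) (T t : ℝ) : HasDerivAt (testFn n T) (testFn₁ n T t) t := by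
  refine (((hasDerivAt_one_sub_div_pow (n + 1) T t).const_mul ((n : ℝ) + 2)).sub
    ((hasDerivAt_one_sub_div_pow (n + 2) T t).const_mul ((n : ℝ) + 1))).congr_deriv ?_
  simp only [testFn₁]; push_cast; ring

theorem hasDerivAt_testFn₁ (n : ℕ) (T t : ℝ) : HasDerivAt (testFn₁ n T) (testFn₂ n T t) t := by
  refine ((((hasDerivAt_one_sub_div_pow n T t).const_mul (((n : ℝ) + 2) ^ 2)).sub
    ((hasDerivAt_one_sub_div_pow (n + 1) T t).const_mul
      (((n : ℝ) + 1) * (n + 3)))).neg.div_const T).congr_deriv ?_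
  simp only [testFn₂]; push_cast; ring

theorem testFn_lower (n : ℕ) {T t : ℝ} (hT : 0 < T) (ht : t ∈ Set.Icc 0 T) :
    (1 - t / T) ^ (n + 2) ≤ testFn n T t := by
  have hu : 0 ≤ 1 - t / T := by rw [sub_nonneg, div_le_one hT]; exact ht.2
  have hx : 0 ≤ t / T := div_nonneg ht.1 hT.le
  have e : testFn n T t = (1 - t / T) ^ (n + 2) + (n + 1) * (1 - t / T) ^ (n + 2) * (t / T) := by
    simp only [testFn]; ring
  rw [e]
  have : 0 ≤ ((n : ℝ) + 1) * (1 - t / T) ^ (n + 2) * (t / T) := by positivity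
  linarith

theorem testFn_abs_le (n : ℕ) {T t : ℝ} (hT : 0 < T) (ht : t ∈ Set.Icc 0 T) :
    |testFn n T t| ≤ (n + 2) * (1 - t / T) ^ (n + 2) := by
  have hu : 0 ≤ 1 - t / T := by rw [sub_nonneg, div_le_one hT]; exact ht.2
  rw [abs_of_nonneg ((pow_nonneg hu _).trans (testFn_lower n hT ht))]
  have : 0 ≤ ((n : ℝ) + 1) * (1 - t / T) ^ (n + 3) := by positivity
  simp only [testFn]; linarith

theorem testFn₂_abs_le (n : ℕ) {T t : ℝ} (hT : 0 < T) (ht : t ∈ Set.Icc 0 T) :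
    |testFn₂ n T t| ≤ ((n + 2) ^ 2 * (n + 1) + (n + 1) * (n + 3) * (n + 2)) * T ^ (-2 : ℝ) *
      (1 - t / T) ^ n := by
  have hu : 0 ≤ 1 - t / T := by rw [sub_nonneg, div_le_one hT]; exact ht.2
  have hx : 0 ≤ t / T := div_nonneg ht.1 hT.le
  have hpw : (1 - t / T) ^ (n + 1) ≤ (1 - t / T) ^ n :=
    pow_le_pow_of_le_one hu (by linarith) (Nat.le_succ n)
  have e : T ^ (-2 : ℝ) = (T ^ 2)⁻¹ := by
    rw [Real.rpow_neg hT.le]; norm_cast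
  rw [e, testFn₂, abs_div, abs_of_pos (by positivity : 0 < T ^ 2), div_eq_mul_inv]
  refine (mul_le_mul_of_nonneg_right ?_ (by positivity : 0 ≤ (T ^ 2)⁻¹)).trans_eq
    (mul_right_comm _ _ _)
  refine (abs_sub _ _).trans ?_
  rw [abs_of_nonneg (by positivity), abs_of_nonneg (by positivity)]
  have := mul_le_mul_of_nonneg_left hpw
    (by positivity : (0:ℝ) ≤ ((n : ℝ) + 1) * (n + 3) * (n + 2))
  linarith

/-- Corollary 2.6 (i): a priori bound for `w'' + a w ≥ b ₀I_t^γ |w|^p` with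
constants `K₁, K₂` independent of `T`. -/
theorem apriori_bound_wave
    (γ p a b : ℝ) (hγ : 0 < γ) (hp : 1 < p) (ha : 0 < a) (hb : 0 < b) :
    ∃ K₁ > (0:ℝ), ∃ K₂ > (0:ℝ), ∀ T > (0:ℝ), ∀ w : ℝ → ℝ,
      ContDiff ℝ 2 w →
      (∃ t ∈ Set.Icc (0:ℝ) T, w t ≠ 0) →
      (∀ᵐ t ∂(volume.restrict (Set.Icc (0:ℝ) T)),
        deriv (deriv w) t + a * w t ≥ b * rlInt γ (fun s => |w s| ^ p) t) →
      T * deriv w 0 + w 0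
        ≤ K₁ * T ^ (2 + γ - p * γ / (p - 1)) + K₂ * T ^ (-(2 + γ) / (p - 1)) := by
  obtain ⟨n, hn⟩ := exists_nat_ge ((2 + γ) * (1 / (p - 1)))
  have hp1 : 0 < p - 1 := by linarith
  have hG : 0 < Real.Gamma γ := Real.Gamma_pos_of_pos hγ
  set c : ℝ := (1 / 2) ^ (n + 2) * (1 / 2) ^ γ / γ with hc
  have hcpos : 0 < c := by positivity
  -- Half of the coefficient in the lower bound for `(b/Γ(γ)) Φ`: one half per linear term.
  set β : ℝ := b / Real.Gamma γ * c / 2 with hβ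
  have hβpos : 0 < β := by positivity
  set M : ℝ := (n + 2) ^ 2 * (n + 1) + (n + 1) * (n + 3) * (n + 2) with hM
  have hMpos : 0 < M := by positivity
  set N : ℝ := n + 2 with hN
  have hNpos : 0 < N := by positivity
  refine ⟨a * N * (a * N / β) ^ (1 / (p - 1)), by positivity,
    M * (M / β) ^ (1 / (p - 1)), by positivity, fun T hT w hw _ hineq => ?_⟩
  have hw1 : ContDiff ℝ 1 (deriv w) := by
    have : ContDiff ℝ (1 + 1) w := by simpa [one_add_one_eq_two] using hw
    exact (contDiff_succ_iff_deriv.1 this).2.2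
  have hw2 : Continuous (deriv (deriv w)) := hw1.continuous_deriv le_rfl
  have dw : ∀ t, HasDerivAt w (deriv w t) t := fun t =>
    (hw.differentiable (by norm_num) t).hasDerivAt
  have dw1 : ∀ t, HasDerivAt (deriv w) (deriv (deriv w) t) t := fun t =>
    (hw1.differentiable (by norm_num) t).hasDerivAt
  have hwc := hw.continuous
  have hψ : Continuous (testFn n T) := by unfold testFn; fun_prop
  have hψ₂ : Continuous (testFn₂ n T) := by unfold testFn₂; fun_prop
  have hh : Continuous (fun s => |w s| ^ p) :=
    hwc.abs.rpow_const fun _ => Or.inr (by linarith)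
  obtain ⟨i1, i2, hF⟩ := rl_fubini (T := T) hγ hh hψ
  have green : ∫ t in (0:ℝ)..T, (deriv (deriv w) t * testFn n T t - w t * testFn₂ n T t) =
      -(deriv w 0 + w 0 / T) := by
    have := intervalIntegral.integral_eq_sub_of_hasDerivAt (a := 0) (b := T)
      (f := fun t => deriv w t * testFn n T t - w t * testFn₁ n T t)
      (f' := fun t => deriv (deriv w) t * testFn n T t - w t * testFn₂ n T t)
      (fun t _ => (((dw1 t).mul (hasDerivAt_testFn n T t)).sub
        ((dw t).mul (hasDerivAt_testFn₁ n T t))).congr_deriv (by ring))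
      ((by fun_prop : Continuous _).intervalIntegrable _ _)
    rw [this]
    simp [testFn, testFn₁, div_self hT.ne']
    ring
  rw [intervalIntegral.integral_of_le hT.le] at green
  have ci : ∀ {f : ℝ → ℝ}, Continuous f → IntegrableOn f (Set.Ioc 0 T) := fun hf =>
    hf.integrableOn_Icc.mono_set Set.Ioc_subset_Icc_self
  have tested : ∫ t in Set.Ioc 0 T, (b / Real.Gamma γ) *
        (testFn n T t * ∫ s in (0:ℝ)..t, (t - s) ^ (γ - 1) * |w s| ^ p) ≤
      ∫ t in Set.Ioc 0 T, (deriv (deriv w) t + a * w t) * testFn n T t := by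
    refine integral_mono_ae (i1.const_mul _) (ci (by fun_prop)) ?_
    filter_upwards [ae_restrict_of_ae_restrict_of_subset Set.Ioc_subset_Icc_self hineq,
      ae_restrict_mem measurableSet_Ioc] with t h1 ht
    have ht' := Set.Ioc_subset_Icc_self ht
    have hu : 0 ≤ 1 - t / T := by rw [sub_nonneg, div_le_one hT]; exact ht.2
    have h0 : 0 ≤ testFn n T t := (pow_nonneg hu _).trans (testFn_lower n hT ht')
    refine le_trans (le_of_eq ?_) (mul_le_mul_of_nonneg_right h1 h0)
    simp only [rlInt]; ring
  rw [integral_const_mul, hF, ← integral_const_mul] at tested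
  have split : ∫ t in Set.Ioc 0 T, (deriv (deriv w) t + a * w t) * testFn n T t =
      -(deriv w 0 + w 0 / T) +
        ∫ t in Set.Ioc 0 T, w t * (testFn₂ n T t + a * testFn n T t) := by
    rw [← green, ← integral_add (ci (by fun_prop)) (ci (by fun_prop))]
    congr 1; funext t; ring
  set E : ℝ := M * (M / β) ^ (1 / (p - 1)) * (T ^ (-2 : ℝ) * T ^ (-(2 + γ) * (1 / (p - 1)))) +
      a * N * (a * N / β) ^ (1 / (p - 1)) * T ^ (-γ * (1 / (p - 1))) with hE
  have j1 : IntegrableOn (fun t => w t * (testFn₂ n T t + a * testFn n T t)) (Set.Ioc 0 T) :=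
    ci (by fun_prop)
  have j2 := i2.const_mul (b / Real.Gamma γ)
  have bound : ∫ s in Set.Ioc 0 T, (w s * (testFn₂ n T s + a * testFn n T s) -
      b / Real.Gamma γ * (|w s| ^ p * ∫ t in s..T, (t - s) ^ (γ - 1) * testFn n T t)) ≤ T * E := by
    have hconst : ∫ _ in Set.Ioo 0 T, E = T * E := by simp [hT.le]
    -- The endpoint `s = T` is discarded because `u = 0` there and Young's inequality degenerates.
    rw [integral_Ioc_eq_integral_Ioo, ← hconst]
    refine setIntegral_mono_on ((j1.sub j2).mono_set Set.Ioo_subset_Ioc_self)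
      (integrableOn_const (by simp)) measurableSet_Ioo fun s hs => ?_
    have hs' := Set.Ioo_subset_Icc_self hs
    have hu : 0 < 1 - s / T := by rw [sub_pos, div_lt_one hT]; exact hs.2
    have hx : 0 < s / T := div_pos hs.1 hT
    have low := rl_lower hγ hT hs.1.le hs.2.le (n + 2) hψ (fun t ht => testFn_lower n hT ht)
    rw [← hc] at low
    have := pointwise_bound (y := w s) (a := a) (β := β) n hp ha hβpos hMpos
      hNpos hT hu (by linarith) hn
      (testFn₂_abs_le n hT hs') (testFn_abs_le n hT hs')
      (Φ := b / Real.Gamma γ * ∫ t in s..T, (t - s) ^ (γ - 1) * testFn n T t)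
      (by
        refine le_trans (le_of_eq ?_) (mul_le_mul_of_nonneg_left low
          (by positivity : 0 ≤ b / Real.Gamma γ))
        rw [hβ]; ring)
    refine le_trans (le_of_eq ?_) this
    ring
  rw [integral_sub j1 j2] at bound
  have key : deriv w 0 + w 0 / T ≤ T * E := by linarith
  have e1 : T * deriv w 0 + w 0 = T * (deriv w 0 + w 0 / T) := by field_simp
  have e2 : T * (T * T ^ (-2 : ℝ)) = 1 := by
    rw [Real.rpow_neg hT.le]
    norm_cast
    field_simp
  have e3 : T ^ (2 + γ - p * γ / (p - 1)) = T * (T * T ^ (-γ * (1 / (p - 1)))) := by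
    have : 2 + γ - p * γ / (p - 1) = 1 + (1 + -γ * (1 / (p - 1))) := by field_simp; ring
    rw [this, Real.rpow_add hT, Real.rpow_add hT, Real.rpow_one]
  have e4 : -(2 + γ) / (p - 1) = -(2 + γ) * (1 / (p - 1)) := by ring
  rw [e1, e3, e4]
  refine (mul_le_mul_of_nonneg_left key hT.le).trans_eq ?_
  rw [hE]
  linear_combination (M * (M / β) ^ (1 / (p - 1)) * T ^ (-(2 + γ) * (1 / (p - 1)))) * e2
end

section
/- Let γ > 0, p > 1, a > 0, b > 0. Suppose w is twice continuously differentiable on [0,∞), w ≢ 0, and for almost every t ≥ 0, w''(t) + a·w(t) ≥ b·(₀I_t^γ (|w|^p))(t). Then liminf_{t→+∞} |w(t)| = 0, and liminf_{t→+∞} t^{min{(1+γ)/p, γ/(p−1)}}·|w(t)| < +∞. -/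
/-! The proof is the test function method. Multiplying the inequality by `φ(t) = (R - t)^n` on
`[0, R]`, integrating by parts on the left and exchanging the order of integration on the right
gives, for `R ≥ 1`,
`β ∫₀ᴿ |w|^p (R - s)^(n+γ) ds ≤ D R^n + C R² ∫₀ᴿ |w| (R - s)^(n-2) ds`
because `∫_s^R (t - s)^(γ-1) (R - t)^n dt` is at least a multiple of
`(R - s)^(n+γ)` (`kernel_lower`). For `n` large, Young's inequality (`young_pointwise`) absorbs
half of the left-hand side and leaves
`(β/2) ∫₀ᴿ |w|^p (R - s)^(n+γ) ds ≤ D R^n + K R^(n+1-γ/(p-1))` (`weighted_bound`, `n = m + 2`).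
With `α = min ((1+γ)/p) (γ/(p-1))`, a bound `|w(t)| ≥ M t^(-α)` for large `t` makes the left-hand
side at least a multiple of `M^p R^(n+γ+1-αp)`, and the choice of `α` makes this exponent at least
`n` and at least `n+1-γ/(p-1)`. Hence `M` is bounded (`exists_frequently_le`), which is the second
claim; the first one follows since `α > 0`. -/


open MeasureTheory Filter

/-- Lower bound for the adjoint (right-sided) fractional integral of the test function, obtained
by keeping only the part `t ≤ (s + R) / 2` of the range of integration. -/
lemma kernel_lower {γ s R : ℝ} (hγ : 0 < γ) (n : ℕ) (hs : s ≤ R) :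
    ((1 / 2) ^ n * (1 / 2) ^ γ / γ) * ((R - s) ^ n * (R - s) ^ γ)
      ≤ ∫ t in s..R, (t - s) ^ (γ - 1) * (R - t) ^ n := by
  have hint : ∀ c d : ℝ, IntervalIntegrable (fun t : ℝ => (t - s) ^ (γ - 1)) volume c d := by
    intro c d
    have := (intervalIntegral.intervalIntegrable_rpow' (a := c - s) (b := d - s)
      (r := γ - 1) (by linarith)).comp_sub_right s
    simpa using this
  have hint2 : ∀ c d : ℝ,
      IntervalIntegrable (fun t : ℝ => (t - s) ^ (γ - 1) * (R - t) ^ n) volume c d := by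
    intro c d
    exact (hint c d).mul_continuousOn (by fun_prop)
  have hm1 : s ≤ (s + R) / 2 := by linarith
  have hm2 : (s + R) / 2 ≤ R := by linarith
  rw [← intervalIntegral.integral_add_adjacent_intervals (hint2 s ((s + R) / 2)) (hint2 _ R)]
  have h2 : 0 ≤ ∫ t in ((s + R) / 2)..R, (t - s) ^ (γ - 1) * (R - t) ^ n := by
    apply intervalIntegral.integral_nonneg hm2
    intro t ht
    have h1 : 0 ≤ t - s := by linarith [ht.1]
    have h3 : 0 ≤ R - t := by linarith [ht.2]
    positivity
  have h1 : ∫ t in s..((s + R) / 2), (t - s) ^ (γ - 1) * ((R - s) / 2) ^ n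
      ≤ ∫ t in s..((s + R) / 2), (t - s) ^ (γ - 1) * (R - t) ^ n := by
    apply intervalIntegral.integral_mono_on hm1 ((hint _ _).mul_const _) (hint2 _ _)
    intro t ht
    have h1 : 0 ≤ t - s := by linarith [ht.1]
    have h3 : 0 ≤ R - s := by linarith
    have h4 : (R - s) / 2 ≤ R - t := by linarith [ht.2]
    gcongr
  have h0 : ∫ t in s..((s + R) / 2), (t - s) ^ (γ - 1) * ((R - s) / 2) ^ n
      = ((1 / 2) ^ n * (1 / 2) ^ γ / γ) * ((R - s) ^ n * (R - s) ^ γ) := by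
    rw [intervalIntegral.integral_mul_const,
      intervalIntegral.integral_comp_sub_right (fun t => t ^ (γ - 1)) s,
      integral_rpow (Or.inl (by linarith))]
    have e1 : (s + R) / 2 - s = (1 / 2) * (R - s) := by ring
    have e2 : (R - s) / 2 = (1 / 2) * (R - s) := by ring
    rw [e1, e2, Real.mul_rpow (by norm_num) (by linarith), mul_pow]
    simp [Real.zero_rpow hγ.ne']
    ring
  linarith

/-- Exchange of the order of integration on the triangle `0 < s < t ≤ R`, combined with
`kernel_lower`. -/
lemma fubini_lower {γ R : ℝ} (hγ : 0 < γ) (n : ℕ) (hR : 0 ≤ R) {f : ℝ → ℝ} (hf : Continuous f)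
    (hf0 : ∀ s, 0 ≤ f s) :
    IntervalIntegrable (fun t => (∫ s in (0:ℝ)..t, (t - s) ^ (γ - 1) * f s) * (R - t) ^ n)
      volume 0 R ∧
    ((1 / 2) ^ n * (1 / 2) ^ γ / γ) * ∫ s in (0:ℝ)..R, f s * ((R - s) ^ n * (R - s) ^ γ)
      ≤ ∫ t in (0:ℝ)..R, (∫ s in (0:ℝ)..t, (t - s) ^ (γ - 1) * f s) * (R - t) ^ n := by
  set h : ℝ → ℝ := (Set.Ioc 0 R).indicator f with hh
  set g : ℝ → ℝ := (Set.Ioc 0 R).indicator (fun x => x ^ (γ - 1)) with hg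
  set φ : ℝ → ℝ := (Set.Ioc 0 R).indicator (fun t => (R - t) ^ n) with hφ
  have hhi : Integrable h := by
    rw [hh, integrable_indicator_iff measurableSet_Ioc]
    exact (hf.integrableOn_Icc (a := 0) (b := R)).mono_set Set.Ioc_subset_Icc_self
  have hgi : Integrable g := by
    rw [hg, integrable_indicator_iff measurableSet_Ioc,
      ← intervalIntegrable_iff_integrableOn_Ioc_of_le hR]
    exact intervalIntegral.intervalIntegrable_rpow' (by linarith)
  have hφm : Measurable φ := Measurable.indicator (by fun_prop) measurableSet_Ioc
  have hφb : ∀ t, ‖φ t‖ ≤ R ^ n := by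
    intro t
    by_cases ht : t ∈ Set.Ioc 0 R
    · have h3 : 0 ≤ R - t := by linarith [ht.2]
      have h4 : R - t ≤ R := by linarith [ht.1]
      rw [hφ, Set.indicator_of_mem ht, Real.norm_of_nonneg (by positivity)]
      gcongr
    · rw [hφ, Set.indicator_of_notMem ht]
      simp
      positivity
  have hH : Integrable (fun z : ℝ × ℝ => (h z.2 * g (z.1 - z.2)) * φ z.1)
      (volume.prod volume) := by
    have h1 := hhi.convolution_integrand (ContinuousLinearMap.mul ℝ ℝ) hgi
    refine Integrable.mul_bdd (c := R ^ n) (by simpa using h1)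
      (hφm.comp measurable_fst).aestronglyMeasurable ?_
    exact Eventually.of_forall fun z => hφb _
  -- the inner integral over `s`
  have inner1 : ∀ t, ∫ s, (h s * g (t - s)) * φ t = (Set.Ioc 0 R).indicator
      (fun t => (∫ s in (0:ℝ)..t, (t - s) ^ (γ - 1) * f s) * (R - t) ^ n) t := by
    intro t
    by_cases ht : t ∈ Set.Ioc 0 R
    · rw [Set.indicator_of_mem ht, integral_mul_const, hφ, Set.indicator_of_mem ht,
        intervalIntegral.integral_of_le ht.1.le, integral_Ioc_eq_integral_Ioo,
        ← integral_indicator measurableSet_Ioo]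
      congr 2
      ext s
      by_cases hs : s ∈ Set.Ioo 0 t
      · rw [Set.indicator_of_mem hs, hh, hg, Set.indicator_of_mem, Set.indicator_of_mem, mul_comm]
        · exact ⟨by linarith [hs.2], by linarith [hs.1, ht.2]⟩
        · exact ⟨hs.1, by linarith [hs.2, ht.2]⟩
      · rw [Set.indicator_of_notMem hs]
        by_cases hs0 : 0 < s
        · have : t - s ∉ Set.Ioc 0 R := fun hx => hs ⟨hs0, by linarith [hx.1]⟩
          rw [hg, Set.indicator_of_notMem this, mul_zero]
        · have : s ∉ Set.Ioc 0 R := fun hx => hs0 hx.1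
          rw [hh, Set.indicator_of_notMem this, zero_mul]
    · rw [Set.indicator_of_notMem ht, hφ]
      simp [Set.indicator_of_notMem ht]
  -- the inner integral over `t`
  have inner2 : ∀ s, ∫ t, (h s * g (t - s)) * φ t = (Set.Ioc 0 R).indicator
      (fun s => f s * ∫ t in s..R, (t - s) ^ (γ - 1) * (R - t) ^ n) s := by
    intro s
    by_cases hs : s ∈ Set.Ioc 0 R
    · simp_rw [mul_assoc]
      rw [Set.indicator_of_mem hs, integral_const_mul, hh, Set.indicator_of_mem hs,
        intervalIntegral.integral_of_le hs.2, ← integral_indicator measurableSet_Ioc]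
      congr 2
      ext t
      by_cases ht : t ∈ Set.Ioc s R
      · rw [Set.indicator_of_mem ht, hφ, hg, Set.indicator_of_mem, Set.indicator_of_mem]
        · exact ⟨by linarith [hs.1, ht.1], ht.2⟩
        · exact ⟨by linarith [ht.1], by linarith [hs.1, ht.2]⟩
      · rw [Set.indicator_of_notMem ht]
        by_cases hs0 : s < t
        · have : t ∉ Set.Ioc 0 R := fun hx => ht ⟨hs0, hx.2⟩
          rw [hφ, Set.indicator_of_notMem this, mul_zero]
        · have : t - s ∉ Set.Ioc 0 R := fun hx => hs0 (by linarith [hx.1])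
          rw [hg, Set.indicator_of_notMem this, zero_mul]
    · rw [Set.indicator_of_notMem hs, hh]
      simp [Set.indicator_of_notMem hs]
  have int1 := hH.integral_prod_left
  have int2 := hH.integral_prod_right
  have swap := integral_integral_swap (f := fun t s => (h s * g (t - s)) * φ t) hH
  simp only [inner1] at int1
  simp only [inner2] at int2
  simp only [inner1, inner2] at swap
  rw [integral_indicator measurableSet_Ioc, integral_indicator measurableSet_Ioc,
    ← intervalIntegral.integral_of_le hR, ← intervalIntegral.integral_of_le hR] at swap
  rw [integrable_indicator_iff measurableSet_Ioc,
    ← intervalIntegrable_iff_integrableOn_Ioc_of_le hR] at int1 int2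
  refine ⟨int1, ?_⟩
  rw [swap, ← intervalIntegral.integral_const_mul]
  apply intervalIntegral.integral_mono_on hR ?_ int2
  · intro s hs
    have := mul_le_mul_of_nonneg_left (kernel_lower hγ n hs.2) (hf0 s)
    linarith
  · apply Continuous.intervalIntegrable
    have : Continuous fun s : ℝ => (R - s) ^ γ :=
      (continuous_const.sub continuous_id).rpow_const fun _ => Or.inr hγ.le
    fun_prop

/-- Green's identity against the test function `(R - t) ^ (m + 2)`, which vanishes to second
order at `R`, so that only boundary terms at `0` remain. -/
lemma test_parts {w : ℝ → ℝ} (hw : ContDiff ℝ 2 w) (m : ℕ) (R : ℝ) :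
    ∫ t in (0:ℝ)..R, (deriv (deriv w) t * (R - t) ^ (m + 2)
        - w t * ((m + 2) * (m + 1) * (R - t) ^ m))
      = -(deriv w 0 * R ^ (m + 2) + (m + 2) * w 0 * R ^ (m + 1)) := by
  have hw1 : ContDiff ℝ 1 (deriv w) := by
    have : ContDiff ℝ (1 + 1) w := by simpa [one_add_one_eq_two] using hw
    exact this.deriv'
  have hw2 : Continuous (deriv (deriv w)) := hw1.continuous_deriv (by norm_num)
  have hwc : Continuous w := hw.continuous
  have hd : ∀ t ∈ Set.uIcc 0 R, HasDerivAt
      (fun t => deriv w t * (R - t) ^ (m + 2) + w t * ((m + 2) * (R - t) ^ (m + 1)))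
      (deriv (deriv w) t * (R - t) ^ (m + 2) - w t * ((m + 2) * (m + 1) * (R - t) ^ m)) t := by
    intro t _
    have h1 : HasDerivAt w (deriv w t) t := (hw.differentiable (by norm_num) t).hasDerivAt
    have h2 : HasDerivAt (deriv w) (deriv (deriv w) t) t :=
      (hw1.differentiable (by norm_num) t).hasDerivAt
    have h3 : HasDerivAt (fun t => R - t) (-1) t := by
      simpa using (hasDerivAt_id t).const_sub R
    have h4 := (h2.mul (h3.pow (m + 2))).add (h1.mul ((h3.pow (m + 1)).const_mul ((m:ℝ) + 2)))
    refine h4.congr_deriv ?_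
    simp
    ring
  rw [intervalIntegral.integral_eq_sub_of_hasDerivAt hd]
  · simp
    ring
  · apply Continuous.intervalIntegrable
    fun_prop

/-- Young's inequality with the weights produced by the test function; the remainder does not
depend on `u = R - s` because `m` is large. -/
lemma young_pointwise {γ p C β R u x : ℝ} (m : ℕ) (hp : 1 < p) (hC : 0 < C)
    (hβ : 0 < β) (hm : (2 + γ) / (p - 1) ≤ m) (hu : 0 < u) (huR : u ≤ R) (hx : 0 ≤ x) :
    C * R ^ 2 * u ^ m * x ≤ β * (x ^ p * (u ^ (m + 2) * u ^ γ))
      + C * (C / β) ^ (1 / (p - 1)) * R ^ ((m:ℝ) + 2 - γ / (p - 1)) := by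
  have hR : 0 < R := hu.trans_le huR
  have hp1 : 0 < p - 1 := by linarith
  have hxp : x ^ p = x * x ^ (p - 1) := by
    rcases hx.eq_or_lt with rfl | hx
    · simp [Real.zero_rpow (by linarith : p ≠ 0)]
    · rw [← Real.rpow_one_add' hx.le (by linarith)]
      ring_nf
  have hrem : 0 ≤ C * (C / β) ^ (1 / (p - 1)) * R ^ ((m:ℝ) + 2 - γ / (p - 1)) := by positivity
  have hmain : 0 ≤ β * (x ^ p * (u ^ (m + 2) * u ^ γ)) := by positivity
  -- the two terms on the right dominate for `x` above and below `Q ^ (1 / (p - 1))`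
  set Q := C / β * (R ^ 2 * u ^ (-(2 + γ))) with hQ
  have hQ0 : 0 < Q := by positivity
  by_cases h : Q ≤ x ^ (p - 1)
  · have h1 : C * R ^ 2 * u ^ m * x = β * (x * Q * (u ^ (m + 2) * u ^ γ)) := by
      have : u ^ (-(2 + γ)) * (u ^ 2 * u ^ γ) = 1 := by
        rw [← Real.rpow_natCast u 2, ← Real.rpow_add hu, ← Real.rpow_add hu]
        simp
      rw [hQ, pow_add]
      calc C * R ^ 2 * u ^ m * x
          = C * R ^ 2 * u ^ m * x * (u ^ (-(2 + γ)) * (u ^ 2 * u ^ γ)) := by rw [this, mul_one]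
        _ = _ := by field_simp
    have h2 : β * (x * Q * (u ^ (m + 2) * u ^ γ)) ≤ β * (x ^ p * (u ^ (m + 2) * u ^ γ)) := by
      rw [hxp]
      gcongr
    linarith
  · push Not at h
    have hxQ : x ≤ Q ^ (1 / (p - 1)) := by
      have := Real.rpow_le_rpow (by positivity) h.le (by positivity : 0 ≤ 1 / (p - 1))
      rwa [← Real.rpow_mul hx, mul_one_div_cancel hp1.ne', Real.rpow_one] at this
    have h1 : C * R ^ 2 * u ^ m * x ≤ C * R ^ 2 * u ^ m * Q ^ (1 / (p - 1)) := by gcongr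
    have h2 : C * R ^ 2 * u ^ m * Q ^ (1 / (p - 1))
        = C * (C / β) ^ (1 / (p - 1)) * (R ^ (2 + 2 / (p - 1)) *
          u ^ ((m:ℝ) - (2 + γ) / (p - 1))) := by
      rw [hQ, Real.mul_rpow (by positivity) (by positivity),
        Real.mul_rpow (by positivity) (by positivity), ← Real.rpow_mul hu.le,
        ← Real.rpow_natCast R 2, ← Real.rpow_mul hR.le, ← Real.rpow_natCast u m,
        Real.rpow_add hR, sub_eq_add_neg (m:ℝ), Real.rpow_add hu]
      push_cast
      have e1 : -(2 + γ) * (1 / (p - 1)) = -((2 + γ) / (p - 1)) := by ring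
      have e2 : 2 * (1 / (p - 1)) = 2 / (p - 1) := by ring
      rw [e1, e2]
      ring
    have h3 : R ^ (2 + 2 / (p - 1)) * u ^ ((m:ℝ) - (2 + γ) / (p - 1))
        ≤ R ^ ((m:ℝ) + 2 - γ / (p - 1)) := by
      have h4 : u ^ ((m:ℝ) - (2 + γ) / (p - 1)) ≤ R ^ ((m:ℝ) - (2 + γ) / (p - 1)) :=
        Real.rpow_le_rpow hu.le huR (by linarith)
      calc _ ≤ R ^ (2 + 2 / (p - 1)) * R ^ ((m:ℝ) - (2 + γ) / (p - 1)) := by gcongr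
        _ = _ := by
          rw [← Real.rpow_add hR]
          congr 1
          ring
    have h5 := mul_le_mul_of_nonneg_left h3
      (by positivity : 0 ≤ C * (C / β) ^ (1 / (p - 1)))
    linarith

/-- The inequality tested against `(R - t) ^ (m + 2)`, after Young's inequality. -/
lemma weighted_bound {γ p a b : ℝ} {w : ℝ → ℝ}
    (hγ : 0 < γ) (hp : 1 < p) (ha : 0 < a) (hb : 0 < b) (hw : ContDiff ℝ 2 w)
    (hineq : ∀ᵐ t ∂(volume.restrict (Set.Ici (0:ℝ))),
      deriv (deriv w) t + a * w t ≥ b * rlInt γ (fun s => |w s| ^ p) t)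
    (m : ℕ) (hm : (2 + γ) / (p - 1) ≤ m) :
    ∃ β D K : ℝ, 0 < β ∧ 0 ≤ D ∧ 0 ≤ K ∧ ∀ R : ℝ, 1 ≤ R →
      β * ∫ s in (0:ℝ)..R, |w s| ^ p * ((R - s) ^ (m + 2) * (R - s) ^ γ)
        ≤ D * R ^ ((m:ℝ) + 2) + K * R ^ ((m:ℝ) + 3 - γ / (p - 1)) := by
  set κ : ℝ := (1 / 2) ^ (m + 2) * (1 / 2) ^ γ / γ with hκ
  have hΓ : 0 < Real.Gamma γ := Real.Gamma_pos_of_pos hγ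
  set β : ℝ := b * (1 / Real.Gamma γ) * κ / 2 with hβ
  have hβ0 : 0 < β := by positivity
  set C : ℝ := (m + 2) * (m + 1) + a with hC
  have hC0 : 0 < C := by positivity
  refine ⟨β, |deriv w 0| + (m + 2) * |w 0|, C * (C / β) ^ (1 / (p - 1)), hβ0, by positivity,
    by positivity, fun R hR => ?_⟩
  have hR0 : 0 ≤ R := by linarith
  have hRpos : 0 < R := by linarith
  have hwc : Continuous w := hw.continuous
  have hw1 : ContDiff ℝ 1 (deriv w) := by
    have : ContDiff ℝ (1 + 1) w := by simpa [one_add_one_eq_two] using hw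
    exact this.deriv'
  have hw2 : Continuous (deriv (deriv w)) := hw1.continuous_deriv (by norm_num)
  have hfc : Continuous fun s => |w s| ^ p :=
    hwc.abs.rpow_const fun _ => Or.inr (by linarith)
  have hγc : Continuous fun s : ℝ => (R - s) ^ γ :=
    (continuous_const.sub continuous_id).rpow_const fun _ => Or.inr hγ.le
  obtain ⟨hFi, hF⟩ := fubini_lower hγ (m + 2) hR0 hfc (fun s => by positivity)
  set F : ℝ → ℝ := fun t =>
    (∫ s in (0:ℝ)..t, (t - s) ^ (γ - 1) * |w s| ^ p) * (R - t) ^ (m + 2) with hFdef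
  set J := ∫ s in (0:ℝ)..R, |w s| ^ p * ((R - s) ^ (m + 2) * (R - s) ^ γ) with hJ
  have step1 : (b * (1 / Real.Gamma γ)) * ∫ t in (0:ℝ)..R, F t
      ≤ ∫ t in (0:ℝ)..R, (deriv (deriv w) t + a * w t) * (R - t) ^ (m + 2) := by
    rw [← intervalIntegral.integral_const_mul]
    apply intervalIntegral.integral_mono_ae_restrict hR0 (hFi.const_mul _)
    · apply Continuous.intervalIntegrable
      fun_prop
    · have h1 := ae_restrict_of_ae_restrict_of_subset
        (fun t (ht : t ∈ Set.Icc 0 R) => Set.mem_Ici.2 ht.1) hineq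
      filter_upwards [h1, ae_restrict_mem measurableSet_Icc] with t ht htR
      have h3 : 0 ≤ R - t := by linarith [htR.2]
      have h4 := mul_le_mul_of_nonneg_right ht (by positivity : 0 ≤ (R - t) ^ (m + 2))
      simp only [rlInt] at h4
      simp only [hFdef]
      linarith
  have step2 : ∫ t in (0:ℝ)..R, (deriv (deriv w) t + a * w t) * (R - t) ^ (m + 2)
      = -(deriv w 0 * R ^ (m + 2) + (m + 2) * w 0 * R ^ (m + 1))
        + ∫ t in (0:ℝ)..R, w t * ((m + 2) * (m + 1) * (R - t) ^ m + a * (R - t) ^ (m + 2)) := by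
    rw [← test_parts hw m R, ← intervalIntegral.integral_add]
    · congr 1
      ext t
      ring
    · apply Continuous.intervalIntegrable
      fun_prop
    · apply Continuous.intervalIntegrable
      fun_prop
  have step3 : -(deriv w 0 * R ^ (m + 2) + (m + 2) * w 0 * R ^ (m + 1))
      ≤ (|deriv w 0| + (m + 2) * |w 0|) * R ^ (m + 2) := by
    have h1 : -deriv w 0 * R ^ (m + 2) ≤ |deriv w 0| * R ^ (m + 2) := by
      gcongr
      exact neg_le_abs _
    have h2 : (m + 2) * (-w 0) * R ^ (m + 1) ≤ (m + 2) * |w 0| * R ^ (m + 2) := by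
      calc (m + 2) * (-w 0) * R ^ (m + 1) ≤ (m + 2) * |w 0| * R ^ (m + 1) := by
            gcongr
            exact neg_le_abs _
        _ ≤ _ := by
            exact mul_le_mul_of_nonneg_left (pow_le_pow_right₀ hR (by omega)) (by positivity)
    linarith
  have step4 : ∫ t in (0:ℝ)..R, w t * ((m + 2) * (m + 1) * (R - t) ^ m + a * (R - t) ^ (m + 2))
      ≤ ∫ t in (0:ℝ)..R, (β * (|w t| ^ p * ((R - t) ^ (m + 2) * (R - t) ^ γ))
        + C * (C / β) ^ (1 / (p - 1)) * R ^ ((m:ℝ) + 2 - γ / (p - 1))) := by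
    apply intervalIntegral.integral_mono_on_of_le_Ioo hR0
    · apply Continuous.intervalIntegrable
      fun_prop
    · apply Continuous.intervalIntegrable
      fun_prop
    · intro t ht
      have hu : 0 < R - t := by linarith [ht.2]
      have huR : R - t ≤ R := by linarith [ht.1]
      refine le_trans ?_ (young_pointwise m hp hC0 hβ0 hm hu huR (abs_nonneg (w t)))
      have h1 : (m + 2) * (m + 1) * (R - t) ^ m + a * (R - t) ^ (m + 2)
          ≤ C * R ^ 2 * (R - t) ^ m := by
        have h2 : (R - t) ^ 2 ≤ R ^ 2 := by gcongr
        have h3 : (1:ℝ) ≤ R ^ 2 := one_le_pow₀ hR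
        have h4 : (m + 2) * (m + 1) * 1 + a * (R - t) ^ 2
            ≤ ((m:ℝ) + 2) * (m + 1) * R ^ 2 + a * R ^ 2 := by gcongr
        have h5 := mul_le_mul_of_nonneg_right h4 (by positivity : 0 ≤ (R - t) ^ m)
        calc _ = ((m + 2) * (m + 1) * 1 + a * (R - t) ^ 2) * (R - t) ^ m := by ring
          _ ≤ _ := h5
          _ = _ := by rw [hC]; ring
      calc _ ≤ |w t| * ((m + 2) * (m + 1) * (R - t) ^ m + a * (R - t) ^ (m + 2)) := by
            gcongr
            exact le_abs_self _
        _ ≤ |w t| * (C * R ^ 2 * (R - t) ^ m) := by gcongr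
        _ = _ := by ring
  rw [intervalIntegral.integral_add (by
      apply Continuous.intervalIntegrable
      fun_prop) (by simp), intervalIntegral.integral_const_mul, ← hJ,
    intervalIntegral.integral_const, smul_eq_mul, sub_zero] at step4
  have hF' := mul_le_mul_of_nonneg_left hF (by positivity : 0 ≤ b * (1 / Real.Gamma γ))
  have e1 : R ^ (m + 2) = R ^ ((m:ℝ) + 2) := by
    rw [← Real.rpow_natCast]
    push_cast
    rfl
  have e2 : R * R ^ ((m:ℝ) + 2 - γ / (p - 1)) = R ^ ((m:ℝ) + 3 - γ / (p - 1)) := by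
    rw [← Real.rpow_one_add' hR0]
    · congr 1
      ring
    · have : γ / (p - 1) ≤ (2 + γ) / (p - 1) := by
        apply div_le_div_of_nonneg_right (by linarith) (by linarith)
      linarith
  have hβ2 : b * (1 / Real.Gamma γ) * (κ * J) = 2 * (β * J) := by
    rw [hβ]
    ring
  rw [← e1, ← e2]
  have e3 : R * (C * (C / β) ^ (1 / (p - 1)) * R ^ ((m:ℝ) + 2 - γ / (p - 1)))
      = C * (C / β) ^ (1 / (p - 1)) * (R * R ^ ((m:ℝ) + 2 - γ / (p - 1))) := by ring
  linarith

lemma exists_frequently_le {γ p a b : ℝ} {w : ℝ → ℝ}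
    (hγ : 0 < γ) (hp : 1 < p) (ha : 0 < a) (hb : 0 < b) (hw : ContDiff ℝ 2 w)
    (hineq : ∀ᵐ t ∂(volume.restrict (Set.Ici (0:ℝ))),
      deriv (deriv w) t + a * w t ≥ b * rlInt γ (fun s => |w s| ^ p) t) :
    ∃ M : ℝ, ∃ᶠ t in atTop, t ^ (min ((1 + γ) / p) (γ / (p - 1))) * |w t| ≤ M := by
  have hp1 : 0 < p - 1 := by linarith
  have hp0 : 0 < p := by linarith
  set α := min ((1 + γ) / p) (γ / (p - 1)) with hα
  have hα0 : 0 < α := lt_min (by positivity) (by positivity)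
  have hα1 : α * p ≤ 1 + γ := by
    have : α ≤ (1 + γ) / p := min_le_left _ _
    rwa [le_div_iff₀ hp0] at this
  have hα2 : α * p ≤ γ + γ / (p - 1) := by
    have : α ≤ γ / (p - 1) := min_le_right _ _
    have h2 : γ / (p - 1) * p = γ + γ / (p - 1) := by
      field_simp
      ring
    nlinarith
  obtain ⟨m, hm⟩ := exists_nat_ge ((2 + γ) / (p - 1))
  obtain ⟨β, D, K, hβ, hD, hK, hbound⟩ := weighted_bound hγ hp ha hb hw hineq m hm
  set θ : ℝ := β * ((1 / 4) * ((1 / 2) ^ (m + 2) * (1 / 2) ^ γ)) with hθ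
  have hθ0 : 0 < θ := by positivity
  set M : ℝ := ((D + K + 1) / θ) ^ (1 / p) with hM
  have hM0 : 0 ≤ M := by positivity
  have hMp : M ^ p = (D + K + 1) / θ := by
    rw [hM, ← Real.rpow_mul (by positivity), one_div_mul_cancel hp0.ne', Real.rpow_one]
  refine ⟨M, fun hev => ?_⟩
  obtain ⟨T, hT⟩ := eventually_atTop.1 hev
  set R : ℝ := max 1 (4 * T) with hRdef
  have hR : 1 ≤ R := le_max_left _ _
  have hRT : T ≤ R / 4 := by
    have := le_max_right 1 (4 * T)
    linarith
  have hRpos : 0 < R := by linarith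
  have hfc : Continuous fun s => |w s| ^ p :=
    hw.continuous.abs.rpow_const fun _ => Or.inr (by linarith)
  have hγc : Continuous fun s : ℝ => (R - s) ^ γ :=
    (continuous_const.sub continuous_id).rpow_const fun _ => Or.inr hγ.le
  have hGc : Continuous fun s : ℝ => |w s| ^ p * ((R - s) ^ (m + 2) * (R - s) ^ γ) := by
    fun_prop
  set c : ℝ := (M ^ p * R ^ (-(α * p))) * ((R / 2) ^ (m + 2) * (R / 2) ^ γ) with hc
  have hlow : (R / 4) * c
      ≤ ∫ s in (0:ℝ)..R, |w s| ^ p * ((R - s) ^ (m + 2) * (R - s) ^ γ) := by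
    have h1 : ∫ s in (R / 4)..(R / 2), |w s| ^ p * ((R - s) ^ (m + 2) * (R - s) ^ γ)
        ≤ ∫ s in (0:ℝ)..R, |w s| ^ p * ((R - s) ^ (m + 2) * (R - s) ^ γ) := by
      apply intervalIntegral.integral_mono_interval (by linarith) (by linarith) (by linarith)
      · filter_upwards [ae_restrict_mem measurableSet_Ioc] with s hs
        have : 0 ≤ R - s := by linarith [hs.2]
        simp only [Pi.zero_apply]
        positivity
      · exact hGc.intervalIntegrable _ _
    have h2 : ∫ s in (R / 4)..(R / 2), c
        ≤ ∫ s in (R / 4)..(R / 2), |w s| ^ p * ((R - s) ^ (m + 2) * (R - s) ^ γ) := by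
      apply intervalIntegral.integral_mono_on (by linarith) (by simp)
        (hGc.intervalIntegrable _ _)
      intro s hs
      have hs0 : 0 < s := by linarith [hs.1]
      have hsR : R / 2 ≤ R - s := by linarith [hs.2]
      have hws : M < s ^ α * |w s| := not_le.1 (hT s (by linarith [hs.1]))
      have hw' : M ^ p * R ^ (-(α * p)) ≤ |w s| ^ p := by
        have h3 : M * R ^ (-α) ≤ |w s| := by
          have h4 : s ^ α ≤ R ^ α :=
            Real.rpow_le_rpow hs0.le (by linarith [hs.2]) hα0.le
          rw [Real.rpow_neg hRpos.le, ← div_eq_mul_inv, div_le_iff₀ (by positivity)]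
          nlinarith [abs_nonneg (w s)]
        calc M ^ p * R ^ (-(α * p)) = (M * R ^ (-α)) ^ p := by
              rw [Real.mul_rpow hM0 (by positivity), ← Real.rpow_mul hRpos.le]
              ring_nf
          _ ≤ _ := Real.rpow_le_rpow (by positivity) h3 hp0.le
      have hs3 : 0 ≤ R - s := by linarith
      rw [hc]
      gcongr
    rw [intervalIntegral.integral_const, smul_eq_mul] at h2
    calc (R / 4) * c = (R / 2 - R / 4) * c := by ring
      _ ≤ _ := h2.trans h1
  have hb1 := hbound R hR
  have hb2 := mul_le_mul_of_nonneg_left hlow hβ.le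
  set E : ℝ := R ^ ((m:ℝ) + 3 + γ - α * p) with hE
  have hE0 : 0 < E := by positivity
  have hcE : β * ((R / 4) * c) = θ * M ^ p * E := by
    have e1 : R / 2 = 1 / 2 * R := by ring
    have e2 : E = R * (R ^ (-(α * p)) * (R ^ (m + 2) * R ^ γ)) := by
      rw [hE, ← Real.rpow_natCast R (m + 2), ← Real.rpow_add hRpos, ← Real.rpow_add hRpos]
      nth_rewrite 2 [← Real.rpow_one R]
      rw [← Real.rpow_add hRpos]
      congr 1
      push_cast
      ring
    rw [hc, e1, Real.mul_rpow (by norm_num) hRpos.le, mul_pow, e2, hθ]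
    ring
  have hE1 : R ^ ((m:ℝ) + 2) ≤ E := Real.rpow_le_rpow_of_exponent_le hR (by linarith)
  have hE2 : R ^ ((m:ℝ) + 3 - γ / (p - 1)) ≤ E :=
    Real.rpow_le_rpow_of_exponent_le hR (by linarith)
  have hE3 := mul_le_mul_of_nonneg_left hE1 hD
  have hE4 := mul_le_mul_of_nonneg_left hE2 hK
  rw [hcE, hMp, mul_div_cancel₀ _ hθ0.ne'] at hb2
  linarith

/-- Corollary 2.6 (ii): liminf |w| = 0 and liminf t^{min{(1+γ)/p, γ/(p−1)}} |w| < ∞. -/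
theorem liminf_props_wave
    (γ p a b : ℝ) (w : ℝ → ℝ)
    (hγ : 0 < γ) (hp : 1 < p) (ha : 0 < a) (hb : 0 < b)
    (hw : ContDiff ℝ 2 w)
    (hw0 : ∃ t : ℝ, 0 ≤ t ∧ w t ≠ 0)
    (hineq : ∀ᵐ t ∂(volume.restrict (Set.Ici (0:ℝ))),
      deriv (deriv w) t + a * w t ≥ b * rlInt γ (fun s => |w s| ^ p) t)
    :
    liminf (fun t : ℝ => ((|w t| : ℝ) : EReal)) atTop = 0 ∧
    liminf (fun t : ℝ =>
      ((t ^ (min ((1 + γ) / p) (γ / (p - 1))) * |w t| : ℝ) : EReal)) atTop < ⊤ := by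
  have hα0 : 0 < min ((1 + γ) / p) (γ / (p - 1)) :=
    lt_min (div_pos (by linarith) (by linarith)) (div_pos hγ (by linarith))
  obtain ⟨M, hM⟩ := exists_frequently_le hγ hp ha hb hw hineq
  constructor
  · apply le_antisymm
    · by_contra hcon
      push Not at hcon
      obtain ⟨ε, hε0, hε⟩ := EReal.lt_iff_exists_real_btwn.1 hcon
      have hε0' : 0 < ε := by exact_mod_cast hε0
      have h1 := eventually_lt_of_lt_liminf hε
      have h2 := ((tendsto_rpow_atTop hα0).atTop_mul_const hε0').eventually_gt_atTop M
      obtain ⟨t, ⟨⟨ht, ht1⟩, ht2⟩, ht3⟩ :=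
        (((hM.and_eventually h1).and_eventually h2).and_eventually (eventually_gt_atTop 0)).exists
      have ht1' : ε < |w t| := by exact_mod_cast ht1
      have h3 := mul_le_mul_of_nonneg_left ht1'.le
        (Real.rpow_nonneg ht3.le (min ((1 + γ) / p) (γ / (p - 1))))
      linarith
    · apply le_liminf_of_le
      · isBoundedDefault
      · exact Eventually.of_forall fun t => by exact_mod_cast abs_nonneg (w t)
  · refine lt_of_le_of_lt (liminf_le_of_frequently_le (a := (M : EReal)) ?_) (EReal.coe_lt_top M)
    exact hM.mono fun t ht => by exact_mod_cast ht
end
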